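/- arXiv:2401.12670 — 7 statements merged into one kernel-verified Lean document; each statement's English description precedes it below -/
import Mathlib

section
/- Let d be a positive integer and let G = (V, E) be a finite simple graph with |V| ≥ C(d+1, 2), with |E| = d|V| − C(d+1, 2), and such that i_G(X) ≤ d|X| − C(d+1, 2) for every X ⊆ V with |X| ≥ d. Then for every set R ⊆ V with |R| = C(d+1, 2), the graph G admits an orientation in which every vertex of V ∖ R has in-degree exactly d and every vertex of R has in-degree exactly d − 1. -/
/-- `inducedEdgeCount G X` is `i_G(X)`, the number of edges of `G` with both endpoints
in `X`. -/
noncomputable def inducedEdgeCount {W : Type*} (G : SimpleGraph W) (X : Set W) : ℕ :=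
  {e ∈ G.edgeSet | ∀ x ∈ e, x ∈ X}.ncard

/-- `D` is an orientation of the simple graph `G`: every arc of `D` comes from an edge of `G`,
and for each edge `{u, v}` of `G` exactly one of the arcs `(u, v)`, `(v, u)` belongs to `D`. -/
def IsOrientation {W : Type*} (G : SimpleGraph W) (D : W → W → Prop) : Prop :=
  (∀ u v, D u v → G.Adj u v) ∧ ∀ u v, G.Adj u v → (D u v ↔ ¬ D v u)

/-!
Choose a head for every edge so that each vertex `v` is chosen at most `m v` times. By Hall's
theorem, applied with `m v` copies of `v`, this is possible as soon as every vertex set `X` spans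
at most `∑ v ∈ X, m v` edges; when moreover `|E| = ∑ v, m v`, every capacity is attained, so the
in-degrees are exactly `m` (Hakimi's orientation theorem).

For `m = d - 1` on `R` and `m = d` elsewhere, `∑ v ∈ X, m v = d|X| - |X ∩ R| ≥ d|X| - |R|`, so
sparsity bounds the edges spanned by a large `X`. If `|X| < 2d`, then `C(|X|, 2) ≤ (d - 1)|X|`, so
even a complete graph on `X` has few enough edges.
-/

section HallWithCapacities

variable {ι α : Type*}

theorem exists_mem_encard_fiber_le [DecidableEq α] (t : ι → Finset α) (c : α → ℕ)
    (hall : ∀ A : Finset ι, A.card ≤ ∑ a ∈ A.biUnion t, c a) :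
    ∃ f : ι → α, (∀ i, f i ∈ t i) ∧ ∀ a, {i | f i = a}.encard ≤ c a := by
  classical
  let copies (i : ι) : Finset (Σ a, Fin (c a)) := (t i).sigma fun _ ↦ Finset.univ
  have biUnion_copies (A : Finset ι) :
      A.biUnion copies = (A.biUnion t).sigma fun _ ↦ Finset.univ := by
    ext p
    simp [copies]
  obtain ⟨g, g_injective, g_mem⟩ :=
    (Finset.all_card_le_biUnion_card_iff_exists_injective copies).1 fun A ↦ by
      simpa [biUnion_copies] using hall A
  refine ⟨fun i ↦ (g i).1, fun i ↦ (Finset.mem_sigma.1 (g_mem i)).1, fun a ↦ ?_⟩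
  let copy (k : Fin (c a)) : Σ b, Fin (c b) := ⟨a, k⟩
  have copy_injective : Function.Injective copy :=
    sigma_mk_injective (β := fun b ↦ Fin (c b))
  have mapsTo_range_copy : Set.MapsTo g {i | (g i).1 = a} (Set.range copy) := by
    rintro i rfl
    exact ⟨(g i).2, rfl⟩
  calc {i | (g i).1 = a}.encard
    _ ≤ (Set.range copy).encard :=
      Set.encard_le_encard_of_injOn mapsTo_range_copy g_injective.injOn
    _ = c a := by
      rw [← Set.image_univ, copy_injective.encard_image, Set.encard_univ,
        ENat.card_eq_coe_fintype_card, Fintype.card_fin]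

theorem sum_ncard_fiber [Finite ι] [Fintype α] (f : ι → α) :
    ∑ a, {i | f i = a}.ncard = Nat.card ι := by
  rw [← Nat.card_congr (Equiv.sigmaFiberEquiv f), Nat.card_sigma]
  rfl

theorem exists_mem_ncard_fiber_eq [Finite ι] [Fintype α] [DecidableEq α] (t : ι → Finset α)
    (c : α → ℕ)
    (hall : ∀ A : Finset ι, A.card ≤ ∑ a ∈ A.biUnion t, c a) (hcard : Nat.card ι = ∑ a, c a) :
    ∃ f : ι → α, (∀ i, f i ∈ t i) ∧ ∀ a, {i | f i = a}.ncard = c a := by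
  obtain ⟨f, f_mem, fiber_le⟩ := exists_mem_encard_fiber_le t c hall
  have ncard_fiber_le (a : α) : {i | f i = a}.ncard ≤ c a :=
    (Set.encard_le_coe_iff_finite_ncard_le.1 (fiber_le a)).2
  have sum_eq : ∑ a, {i | f i = a}.ncard = ∑ a, c a := (sum_ncard_fiber f).trans hcard
  exact ⟨f, f_mem, fun a ↦
    (Finset.sum_eq_sum_iff_of_le fun b _ ↦ ncard_fiber_le b).1 sum_eq a (Finset.mem_univ a)⟩

end HallWithCapacities

section InducedEdges

variable {V : Type*} (G : SimpleGraph V)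

theorem finite_setOf_edge_subset (X : Finset V) :
    {e ∈ G.edgeSet | ∀ x ∈ e, x ∈ (X : Set V)}.Finite :=
  X.sym2.finite_toSet.subset fun _ he ↦ Finset.mem_sym2_iff.2 he.2

theorem card_le_inducedEdgeCount_biUnion [DecidableEq V] (A : Finset G.edgeSet) :
    A.card ≤ inducedEdgeCount G (A.biUnion fun e ↦ (e : Sym2 V).toFinset : Finset V) := by
  rw [← Finset.card_map (Function.Embedding.subtype _), ← Set.ncard_coe_finset]
  refine Set.ncard_le_ncard (fun e he ↦ ?_) (finite_setOf_edge_subset G _)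
  obtain ⟨e, e_mem, rfl⟩ := Finset.mem_map.1 he
  exact ⟨e.2, fun x hx ↦ Finset.mem_biUnion.2 ⟨e, e_mem, Sym2.mem_toFinset.2 hx⟩⟩

theorem inducedEdgeCount_le_choose_two (X : Finset V) :
    inducedEdgeCount G X ≤ X.card.choose 2 := by
  classical
  rw [← Sym2.card_image_offDiag, ← Set.ncard_coe_finset]
  refine Set.ncard_le_ncard ?_
  rintro ⟨u, v⟩ ⟨huv, hX⟩
  exact Finset.mem_image.2 ⟨(u, v), Finset.mem_offDiag.2
    ⟨hX u (Sym2.mem_mk_left u v), hX v (Sym2.mem_mk_right u v), G.ne_of_adj huv⟩, rfl⟩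

end InducedEdges

section Orientation

variable {V : Type*} {G : SimpleGraph V}

/-- The digraph obtained from `G` by directing each edge `e` towards the vertex `head e`. It is an
orientation of `G` when `head e` is always an endpoint of `e`. -/
def orientToward (head : G.edgeSet → V) (u v : V) : Prop :=
  ∃ h : G.Adj u v, head ⟨s(u, v), h⟩ = v

theorem orientToward_swap_iff {head : G.edgeSet → V} {u v : V} (huv : G.Adj u v) :
    orientToward head v u ↔ head ⟨s(u, v), huv⟩ = u := by
  have edge_eq : (⟨s(v, u), huv.symm⟩ : G.edgeSet) = ⟨s(u, v), huv⟩ := Subtype.ext Sym2.eq_swap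
  rw [orientToward, exists_prop_of_true huv.symm, edge_eq]

theorem isOrientation_orientToward {head : G.edgeSet → V}
    (head_mem : ∀ e : G.edgeSet, head e ∈ (e : Sym2 V)) : IsOrientation G (orientToward head) := by
  refine ⟨fun u v h ↦ h.1, fun u v huv ↦ ?_⟩
  rw [orientToward_swap_iff huv, orientToward, exists_prop_of_true huv]
  constructor
  · intro head_eq_v head_eq_u
    exact huv.ne (head_eq_u.symm.trans head_eq_v)
  · exact (Sym2.mem_iff.1 (head_mem ⟨s(u, v), huv⟩)).resolve_left

theorem ncard_setOf_orientToward {head : G.edgeSet → V}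
    (head_mem : ∀ e : G.edgeSet, head e ∈ (e : Sym2 V)) (v : V) :
    {u | orientToward head u v}.ncard = {e | head e = v}.ncard := by
  refine Set.ncard_congr (fun u hu ↦ ⟨s(u, v), hu.1⟩) (fun u hu ↦ hu.2) ?_ ?_
  · intro u w _ _ edge_eq
    exact Sym2.congr_left.1 (congrArg Subtype.val edge_eq)
  · rintro e rfl
    obtain ⟨u, edge_eq⟩ := Sym2.mem_iff_exists.1 (head_mem e)
    rw [Sym2.eq_swap] at edge_eq
    have adj : G.Adj u (head e) := G.mem_edgeSet.1 (edge_eq ▸ e.2)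
    have mk_eq : ⟨s(u, head e), adj⟩ = e := Subtype.ext edge_eq.symm
    exact ⟨u, ⟨adj, congrArg head mk_eq⟩, mk_eq⟩

theorem exists_isOrientation_ncard_eq [Fintype V] {m : V → ℕ}
    (card_edges : G.edgeSet.ncard = ∑ v, m v)
    (induced_le : ∀ X : Finset V, inducedEdgeCount G X ≤ ∑ v ∈ X, m v) :
    ∃ D : V → V → Prop, IsOrientation G D ∧ ∀ v, {u | D u v}.ncard = m v := by
  classical
  obtain ⟨head, head_mem, ncard_fiber⟩ :=
    exists_mem_ncard_fiber_eq (fun e : G.edgeSet ↦ (e : Sym2 V).toFinset) m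
      (fun A ↦ (card_le_inducedEdgeCount_biUnion G A).trans (induced_le _)) card_edges
  simp only [Sym2.mem_toFinset] at head_mem
  exact ⟨orientToward head, isOrientation_orientToward head_mem,
    fun v ↦ (ncard_setOf_orientToward head_mem v).trans (ncard_fiber v)⟩

end Orientation

section TargetInDegree

variable {V : Type*} {d : ℕ}

/-- The prescribed in-degrees: `d - 1` on `R` and `d` off `R`. The subtraction is truncated, so
this is the intended function only for `0 < d`. -/
noncomputable def targetInDegree (d : ℕ) (R : Set V) (v : V) : ℕ :=
  d - R.indicator 1 v

theorem sum_targetInDegree_add_ncard_inter (hd : 0 < d) (R : Set V) (X : Finset V) :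
    ∑ v ∈ X, targetInDegree d R v + (X ∩ R : Set V).ncard = d * X.card := by
  classical
  have ncard_inter : (X ∩ R : Set V).ncard = ∑ v ∈ X, R.indicator 1 v := by
    simp [Set.indicator_apply, ← Set.ncard_coe_finset, Set.ofPred_and, Set.inter_comm]
  have indicator_le (v : V) : R.indicator 1 v ≤ d :=
    (Set.indicator_le_self' (fun _ _ ↦ zero_le_one) v).trans hd
  calc ∑ v ∈ X, targetInDegree d R v + (X ∩ R : Set V).ncard
    _ = ∑ v ∈ X, (d - R.indicator 1 v + R.indicator 1 v) := by
      rw [ncard_inter, Finset.sum_add_distrib]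
      rfl
    _ = ∑ _ ∈ X, d := Finset.sum_congr rfl fun v _ ↦ Nat.sub_add_cancel (indicator_le v)
    _ = d * X.card := by rw [Finset.sum_const, smul_eq_mul, mul_comm]

theorem pred_mul_card_le_sum_targetInDegree (d : ℕ) (R : Set V) (X : Finset V) :
    (d - 1) * X.card ≤ ∑ v ∈ X, targetInDegree d R v := by
  rw [mul_comm, ← smul_eq_mul]
  exact Finset.card_nsmul_le_sum _ _ _ fun v _ ↦
    Nat.sub_le_sub_left (Set.indicator_le_self' (fun _ _ ↦ zero_le_one) v) d

theorem choose_two_le_pred_mul {n : ℕ} (hn : n < 2 * d) : n.choose 2 ≤ (d - 1) * n := by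
  rw [Nat.choose_two_right]
  refine Nat.div_le_of_le_mul ?_
  calc n * (n - 1) ≤ n * (2 * (d - 1)) := Nat.mul_le_mul_left n (by lia)
    _ = 2 * ((d - 1) * n) := by ring

theorem inducedEdgeCount_le_sum_targetInDegree (hd : 0 < d) {G : SimpleGraph V} {R : Set V}
    (hR : R.Finite)
    (hsparse : ∀ X : Set V, 2 * d ≤ X.ncard → inducedEdgeCount G X + R.ncard ≤ d * X.ncard)
    (X : Finset V) : inducedEdgeCount G X ≤ ∑ v ∈ X, targetInDegree d R v := by
  obtain hX | hX := lt_or_ge X.card (2 * d)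
  · calc inducedEdgeCount G X ≤ X.card.choose 2 := inducedEdgeCount_le_choose_two G X
      _ ≤ (d - 1) * X.card := choose_two_le_pred_mul hX
      _ ≤ ∑ v ∈ X, targetInDegree d R v := pred_mul_card_le_sum_targetInDegree d R X
  · have sparse := hsparse X (by rwa [Set.ncard_coe_finset])
    rw [Set.ncard_coe_finset] at sparse
    have sum_eq := sum_targetInDegree_add_ncard_inter hd R X
    have inter_le : (X ∩ R : Set V).ncard ≤ R.ncard :=
      Set.ncard_le_ncard Set.inter_subset_right hR
    lia

end TargetInDegree

theorem dR_orientation_exists_general {V : Type*} [Fintype V] {d : ℕ} (hd : 0 < d)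
    {G : SimpleGraph V} {R : Set V}
    (hE : G.edgeSet.ncard + R.ncard = d * Fintype.card V)
    (hsparse : ∀ X : Set V, 2 * d ≤ X.ncard → inducedEdgeCount G X + R.ncard ≤ d * X.ncard) :
    ∃ D : V → V → Prop, IsOrientation G D ∧
      (∀ v : V, v ∉ R → {u | D u v}.ncard = d) ∧
      (∀ v : V, v ∈ R → {u | D u v}.ncard = d - 1) := by
  have card_edges : G.edgeSet.ncard = ∑ v, targetInDegree d R v := by
    have sum_eq := sum_targetInDegree_add_ncard_inter hd R Finset.univ
    rw [Finset.coe_univ, Set.univ_inter, Finset.card_univ] at sum_eq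
    lia
  obtain ⟨D, D_orientation, ncard_eq⟩ := exists_isOrientation_ncard_eq card_edges
    (inducedEdgeCount_le_sum_targetInDegree hd R.toFinite hsparse)
  refine ⟨D, D_orientation, fun v hv ↦ ?_, fun v hv ↦ ?_⟩
  · rw [ncard_eq, targetInDegree, Set.indicator_of_notMem hv, Nat.sub_zero]
  · rw [ncard_eq, targetInDegree, Set.indicator_of_mem hv, Pi.one_apply]

/-- Let `G` be a finite simple graph with `|V| ≥ C(d+1,2)`, with
`|E| = d|V| − C(d+1,2)`, and with `i_G(X) ≤ d|X| − C(d+1,2)` for every `X ⊆ V` with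
`|X| ≥ d`. Then for every `R ⊆ V` with `|R| = C(d+1,2)`, `G` has an orientation in which
every vertex outside `R` has in-degree exactly `d` and every vertex of `R` has in-degree
exactly `d − 1`. -/
theorem dR_orientation_exists {V : Type*} [Fintype V] (d : ℕ) (hd : 0 < d)
    (G : SimpleGraph V)
    (hV : (d + 1).choose 2 ≤ Fintype.card V)
    (hE : G.edgeSet.ncard + (d + 1).choose 2 = d * Fintype.card V)
    (hsparse : ∀ X : Set V, d ≤ X.ncard →
      inducedEdgeCount G X + (d + 1).choose 2 ≤ d * X.ncard)
    (R : Set V) (hR : R.ncard = (d + 1).choose 2) :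
    ∃ D : V → V → Prop, IsOrientation G D ∧
      (∀ v : V, v ∉ R → {u | D u v}.ncard = d) ∧
      (∀ v : V, v ∈ R → {u | D u v}.ncard = d - 1) := by
  rw [← hR] at hE hsparse
  exact dR_orientation_exists_general hd hE fun X hX ↦ hsparse X (by lia)
end

section
/- Let d and k be integers with k ≥ 2 and d ≥ 4k − 4. Let G = (V, E) be a finite simple graph with |V| ≥ C(d+1, 2) such that i_G(X) ≤ d|X| − C(d+1, 2) for every X ⊆ V with |X| ≥ d. Let R ⊆ V with |R| = C(d+1, 2), and let D be an orientation of G in which every vertex of V ∖ R has in-degree exactly d and every vertex of R has in-degree exactly d − 1. Then every nonempty set X ⊆ V with 2·|X ∩ R| ≤ C(d+1, 2) has at least k in-neighbors in D. -/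
/-!
Let `N` be the set of in-neighbors of `X` and `Y = X ∪ N`. Every arc with head in `X` is an edge
inside `Y`, so the in-degrees force at least `d|X| - |X ∩ R|` edges there. A vertex of `X` together
with the tails of the arcs entering it already fills `d` places of `Y`, so sparsity applies to `Y`
and gives `C(d+1, 2) ≤ d|N| + |X ∩ R|`. As `X ∩ R` accounts for at most half of the left-hand side,
`d(d + 1) / 4 ≤ d|N|`.
-/

section

variable {V : Type*}

/-- The set of in-neighbors of a vertex set `X` in the digraph with arc relation `D`: the vertices
outside `X` from which an arc enters `X`. -/
def inNeighborSet (D : V → V → Prop) (X : Set V) : Set V :=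
  {w | w ∉ X ∧ ∃ x ∈ X, D w x}

section InNeighborSet

variable {D : V → V → Prop} {X : Set V}

lemma disjoint_inNeighborSet : Disjoint X (inNeighborSet D X) :=
  Set.disjoint_right.2 fun _ hw => hw.1

lemma setOf_arc_subset_union_inNeighborSet {x : V} (hx : x ∈ X) :
    {u | D u x} ⊆ X ∪ inNeighborSet D X := fun _ hu =>
  or_iff_not_imp_left.2 fun huX => ⟨huX, x, hx, hu⟩

lemma finite_inNeighborSet (hX : X.Finite) (hD : ∀ x ∈ X, {u | D u x}.Finite) :
    (inNeighborSet D X).Finite :=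
  (hX.biUnion hD).subset fun _ ⟨_, _, hx, hwx⟩ => Set.mem_biUnion hx hwx

end InNeighborSet

namespace IsOrientation

variable {G : SimpleGraph V} {D : V → V → Prop}

lemma adj (hD : IsOrientation G D) {u v : V} (huv : D u v) : G.Adj u v :=
  hD.1 u v huv

lemma asymm (hD : IsOrientation G D) {u v : V} (huv : D u v) : ¬ D v u :=
  (hD.2 u v (hD.adj huv)).1 huv

lemma ncard_setOf_arc_lt (hD : IsOrientation G D) {Y : Set V} (hY : Y.Finite) {x : V}
    (hx : x ∈ Y) (hxY : {u | D u x} ⊆ Y) : {u | D u x}.ncard < Y.ncard :=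
  Set.ncard_lt_ncard (hxY.ssubset_of_mem_notMem hx fun hxx => (hD.adj hxx).ne rfl) hY

lemma injOn_sym2Mk (hD : IsOrientation G D) :
    Set.InjOn (fun a : V × V => s(a.1, a.2)) {a | D a.1 a.2} := by
  rintro ⟨u, v⟩ huv ⟨u', v'⟩ huv' hedge
  rcases Sym2.eq_iff.1 hedge with ⟨rfl, rfl⟩ | ⟨rfl, rfl⟩
  · rfl
  · exact absurd huv' (hD.asymm huv)

lemma ncard_arcs_le_inducedEdgeCount (hD : IsOrientation G D) {Y : Set V} (hY : Y.Finite)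
    {A : Set (V × V)} (hA : A ⊆ {a | D a.1 a.2}) (hAY : A ⊆ Y ×ˢ Y) :
    A.ncard ≤ inducedEdgeCount G Y := by
  have hfin : {e ∈ G.edgeSet | ∀ x ∈ e, x ∈ Y}.Finite := by
    refine ((hY.prod hY).image fun a => s(a.1, a.2)).subset ?_
    rintro ⟨u, v⟩ ⟨-, huv⟩
    exact ⟨(u, v), ⟨huv u (Sym2.mem_mk_left u v), huv v (Sym2.mem_mk_right u v)⟩, rfl⟩
  refine Set.ncard_le_ncard_of_injOn _ ?_ (hD.injOn_sym2Mk.mono hA) hfin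
  exact fun a ha => ⟨hD.adj (hA ha), Sym2.forall_mem_pair.2 (hAY ha)⟩

lemma sum_ncard_setOf_arc_le_inducedEdgeCount (hD : IsOrientation G D) {X : Finset V} {Y : Set V}
    (hY : Y.Finite) (hXY : ↑X ⊆ Y) (hDY : ∀ x ∈ X, {u | D u x} ⊆ Y) :
    ∑ x ∈ X, {u | D u x}.ncard ≤ inducedEdgeCount G Y := by
  classical
  lift Y to Finset V using hY
  let A : Finset (V × V) := {a ∈ Y ×ˢ X | D a.1 a.2}
  have hsum : ∑ x ∈ X, {u | D u x}.ncard = (A : Set (V × V)).ncard := by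
    rw [Set.ncard_coe_finset, Finset.card_filter, Finset.sum_product_right]
    refine Finset.sum_congr rfl fun x hx => ?_
    rw [← Finset.card_filter, ← Set.ncard_coe_finset, Finset.coe_filter]
    exact congrArg Set.ncard (Set.ext fun u => ⟨fun hu => ⟨hDY x hx hu, hu⟩, And.right⟩)
  rw [hsum]
  refine hD.ncard_arcs_le_inducedEdgeCount Y.finite_toSet (fun a ha => (Finset.mem_filter.1 ha).2)
    fun a ha => ?_
  have haYX := Finset.mem_product.1 (Finset.mem_filter.1 ha).1
  exact ⟨haYX.1, hXY haYX.2⟩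

end IsOrientation

lemma mul_card_le_sum_add_ncard_inter {X : Finset V} {R : Set V} {f : V → ℕ} {d : ℕ}
    (hf : ∀ x ∈ X, x ∉ R → d ≤ f x) (hfR : ∀ x ∈ X, x ∈ R → d ≤ f x + 1) :
    d * X.card ≤ ∑ x ∈ X, f x + (↑X ∩ R).ncard := by
  classical
  have hinter : (↑X ∩ R).ncard = ∑ x ∈ X, if x ∈ R then 1 else 0 := by
    rw [← Finset.card_filter, ← Set.ncard_coe_finset, Finset.coe_filter]
    rfl
  rw [hinter, ← Finset.sum_add_distrib, mul_comm, ← smul_eq_mul]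
  refine Finset.card_nsmul_le_sum _ _ _ fun x hx => ?_
  split_ifs with hxR
  · exact hfR x hx hxR
  · exact hf x hx hxR

lemma lt_four_mul_of_choose_two_le {d n r : ℕ} (hd : 0 < d) (hr : 2 * r ≤ (d + 1).choose 2)
    (hn : (d + 1).choose 2 ≤ d * n + r) : d < 4 * n := by
  have hchoose : (d + 1) * d = (d + 1).choose 2 * 2 := by
    simpa using Nat.add_one_mul_choose_eq d 1
  have hmul : d * (d + 1) ≤ d * (4 * n) := by linarith
  exact Nat.le_of_mul_le_mul_left hmul hd

theorem inneighbors_of_dR_orientation_general {d k : ℕ} (hd : 0 < d) (hdk : 4 * k ≤ d + 4)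
    {G : SimpleGraph V}
    (hsparse : ∀ Y : Set V, d ≤ Y.ncard →
      inducedEdgeCount G Y + (d + 1).choose 2 ≤ d * Y.ncard)
    {D : V → V → Prop} (hD : IsOrientation G D) {X R : Set V} (hX : X.Finite)
    (hne : X.Nonempty) (hfin : ∀ x ∈ X, {u | D u x}.Finite)
    (hdeg : ∀ x ∈ X, x ∉ R → d ≤ {u | D u x}.ncard)
    (hdegR : ∀ x ∈ X, x ∈ R → d ≤ {u | D u x}.ncard + 1)
    (hXR : 2 * (X ∩ R).ncard ≤ (d + 1).choose 2) :
    k ≤ (inNeighborSet D X).ncard := by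
  have hN : (inNeighborSet D X).Finite := finite_inNeighborSet hX hfin
  have hYcard := Set.ncard_union_eq (disjoint_inNeighborSet (D := D)) hX hN
  set Y := X ∪ inNeighborSet D X
  have hY : Y.Finite := hX.union hN
  have hXY : X ⊆ Y := Set.subset_union_left
  have hDY : ∀ x ∈ X, {u | D u x} ⊆ Y := fun x hx => setOf_arc_subset_union_inNeighborSet hx
  have hdY : d ≤ Y.ncard := by
    obtain ⟨x, hx⟩ := hne
    have hlt := hD.ncard_setOf_arc_lt hY (hXY hx) (hDY x hx)
    by_cases hxR : x ∈ R
    · exact (hdegR x hx hxR).trans hlt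
    · exact (hdeg x hx hxR).trans hlt.le
  have hsparseY := hsparse Y hdY
  lift X to Finset V using hX
  have hedges := hD.sum_ncard_setOf_arc_le_inducedEdgeCount hY hXY hDY
  have hdegsum := mul_card_le_sum_add_ncard_inter hdeg hdegR
  rw [hYcard, Set.ncard_coe_finset, mul_add] at hsparseY
  have hchoose : (d + 1).choose 2 ≤ d * (inNeighborSet D ↑X).ncard + (↑X ∩ R).ncard := by
    linarith
  have hlt := lt_four_mul_of_choose_two_le hd hXR hchoose
  lia

end

/-- Let `k ≥ 2` and `d ≥ 4k − 4`. Let `G` be a finite simple graph with `|V| ≥ C(d+1,2)`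
satisfying `i_G(X) ≤ d|X| − C(d+1,2)` for every `X ⊆ V` with `|X| ≥ d`, let `R ⊆ V` with
`|R| = C(d+1,2)`, and let `D` be an orientation of `G` in which every vertex outside `R`
has in-degree exactly `d` and every vertex of `R` has in-degree exactly `d − 1`. Then every
nonempty `X ⊆ V` with `2|X ∩ R| ≤ C(d+1,2)` has at least `k` in-neighbors in `D`. -/
theorem inneighbors_of_dR_orientation {V : Type*} [Fintype V] (d k : ℕ)
    (hk : 2 ≤ k) (hdk : 4 * k ≤ d + 4)
    (G : SimpleGraph V)
    (hV : (d + 1).choose 2 ≤ Fintype.card V)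
    (hsparse : ∀ X : Set V, d ≤ X.ncard →
      inducedEdgeCount G X + (d + 1).choose 2 ≤ d * X.ncard)
    (R : Set V) (hR : R.ncard = (d + 1).choose 2)
    (D : V → V → Prop) (hor : IsOrientation G D)
    (hdeg : ∀ v : V, v ∉ R → {u | D u v}.ncard = d)
    (hdegR : ∀ v : V, v ∈ R → {u | D u v}.ncard = d - 1) :
    ∀ X : Set V, X.Nonempty → 2 * (X ∩ R).ncard ≤ (d + 1).choose 2 →
      k ≤ {w | w ∉ X ∧ ∃ x ∈ X, D w x}.ncard :=
  fun X hX hXR => inneighbors_of_dR_orientation_general (by lia) hdk hsparse hor X.toFinite hX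
    (fun _ _ => Set.toFinite _) (fun x _ hx => (hdeg x hx).ge)
    (fun x _ hx => Nat.sub_le_iff_le_add.1 (hdegR x hx).ge) hXR
end

section
/- Let k ≥ 2 be an integer and set d = 4k − 4. Let G be a finite simple graph on vertex set V with |V| ≥ C(d+1, 2), and suppose G contains two edge-disjoint spanning subgraphs G₁ and G₂ such that, for each i ∈ {1, 2}, |E(G_i)| = d|V| − C(d+1, 2) and i_{G_i}(X) ≤ d|X| − C(d+1, 2) for every X ⊆ V with |X| ≥ d. Then G has a k-connected orientation. -/
/-- After deleting the vertex set `S`, the directed graph `D` is strongly connected: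
any vertex outside `S` can be reached from any other vertex outside `S` by a directed
path avoiding `S`. -/
def StronglyConnectedOutside {W : Type*} (D : W → W → Prop) (S : Set W) : Prop :=
  ∀ u v : W, u ∉ S → v ∉ S →
    Relation.ReflTransGen (fun a b => D a b ∧ a ∉ S ∧ b ∉ S) u v

/-- A directed graph `D` is `k`-connected if it has at least `k+1` vertices and it remains
strongly connected after the removal of any set of fewer than `k` vertices. -/
def DKConnected {W : Type*} (D : W → W → Prop) (k : ℕ) : Prop :=
  k + 1 ≤ Nat.card W ∧
    ∀ S : Set W, S.Finite → S.ncard < k → StronglyConnectedOutside D S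

/-!
Fix a set `Z` of `C(d+1, 2)` vertices. By Hall's theorem and the sparsity counts, each `Gᵢ` has an
orientation in which every vertex has in-degree at least `d`, or `d - 1` if it lies in `Z`. Orient
`G₁` this way, `G₂` in the reverse way, and the other edges of `G` arbitrarily.

Suppose that after deleting a set `S` no arc leads from `A` to `B`, where `A` and `B` partition the
other vertices. All arcs of `G₁` with head in `B` then lie inside `B ∪ S`. The in-degree of a single
vertex of `B` shows that `|B ∪ S| ≥ d`, and comparing the sum of the in-degrees over `B` with the
number of edges induced by `B ∪ S` gives `|Z \ B| ≤ d|S|`. The reversed orientation of `G₂` gives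
`|Z \ A| ≤ d|S|` in the same way. Hence `C(d+1, 2) = |Z| ≤ 2d|S|`, which is false when
`|S| ≤ k - 1 ≤ d / 4`.
-/

lemma add_one_choose_two_mul_two (n : ℕ) : (n + 1).choose 2 * 2 = (n + 1) * n := by
  simpa using (Nat.add_one_mul_choose_eq n 1).symm

section Orientation

variable {W : Type*} {G G₁ G₂ H : SimpleGraph W} {D D₁ D₂ : W → W → Prop}

lemma IsOrientation.asymm_s8 (hD : IsOrientation H D) {u v : W} (huv : D u v) : ¬ D v u :=
  (hD.2 u v (hD.1 u v huv)).1 huv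

lemma exists_isOrientation_extending (hadj : ∀ u v, D u v → G.Adj u v)
    (hasymm : ∀ u v, D u v → ¬ D v u) :
    ∃ D' : W → W → Prop, IsOrientation G D' ∧ ∀ u v, D u v → D' u v := by
  refine ⟨fun u v => D u v ∨ G.Adj u v ∧ ¬ D v u ∧ WellOrderingRel u v,
    ⟨fun u v huv => huv.elim (hadj u v) And.left, fun u v huv => ?_⟩, fun u v => Or.inl⟩
  have hforward := hasymm u v
  have hnot_both : WellOrderingRel u v → ¬ WellOrderingRel v u := asymm_of WellOrderingRel
  have hone : WellOrderingRel u v ∨ WellOrderingRel v u :=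
    (trichotomous_of WellOrderingRel u v).imp_right (Or.resolve_left · huv.ne)
  have hvu := huv.symm
  tauto

lemma exists_isOrientation_extending_forward_backward (hsub₁ : G₁ ≤ G) (hsub₂ : G₂ ≤ G)
    (hdisj : Disjoint G₁.edgeSet G₂.edgeSet) (hD₁ : IsOrientation G₁ D₁)
    (hD₂ : IsOrientation G₂ D₂) :
    ∃ D : W → W → Prop, IsOrientation G D ∧
      (∀ u v, D₁ u v → D u v) ∧ ∀ u v, D₂ u v → D v u := by
  have hnot_both (u v : W) (h₁ : G₁.Adj u v) (h₂ : G₂.Adj u v) : False :=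
    Set.disjoint_left.1 hdisj (G₁.mem_edgeSet.2 h₁) (G₂.mem_edgeSet.2 h₂)
  obtain ⟨D, hD, hext⟩ := exists_isOrientation_extending (G := G)
    (D := fun u v => D₁ u v ∨ D₂ v u)
    (by
      rintro u v (huv | hvu)
      · exact hsub₁ (hD₁.1 u v huv)
      · exact hsub₂ (hD₂.1 v u hvu).symm)
    (by
      rintro u v (huv | hvu) (hvu' | huv')
      · exact hD₁.asymm_s8 huv hvu'
      · exact hnot_both u v (hD₁.1 u v huv) (hD₂.1 u v huv')
      · exact hnot_both v u (hD₁.1 v u hvu') (hD₂.1 v u hvu)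
      · exact hD₂.asymm_s8 hvu huv')
  exact ⟨D, hD, fun u v h => hext u v (Or.inl h), fun u v h => hext v u (Or.inr h)⟩

end Orientation

lemma stronglyConnectedOutside_of_forall_cut {W : Type*} {D : W → W → Prop} {S : Set W}
    (hcut : ∀ A B : Set W, A.Nonempty → B.Nonempty → Disjoint A B → A ∪ B = Sᶜ →
      ∃ a ∈ A, ∃ b ∈ B, D a b) :
    StronglyConnectedOutside D S := by
  intro u v hu hv
  by_contra hunreachable
  set A : Set W := {x | Relation.ReflTransGen (fun a b => D a b ∧ a ∉ S ∧ b ∉ S) u x}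
  have hAS : A ⊆ Sᶜ := by
    intro x hx
    cases hx with
    | refl => exact hu
    | tail _ hstep => exact hstep.2.2
  obtain ⟨a, ha, b, hb, hab⟩ := hcut A (Sᶜ \ A) ⟨u, .refl⟩ ⟨v, hv, hunreachable⟩
    Set.disjoint_sdiff_right (Set.union_sdiff_cancel hAS)
  exact hb.2 (ha.tail ⟨hab, hAS ha, hb.1⟩)

/-- The in-degree of `v` in the directed graph `D`; it is `0` when `v` has infinitely many
in-neighbours. -/
noncomputable def inDegree {W : Type*} (D : W → W → Prop) (v : W) : ℕ :=
  {u | D u v}.ncard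

lemma inducedEdgeCount_le_choose_two_s8 {W : Type*} {H : SimpleGraph W} (X : Finset W) :
    inducedEdgeCount H X ≤ X.card.choose 2 := by
  classical
  rw [← Sym2.card_image_offDiag, ← Set.ncard_coe_finset, inducedEdgeCount]
  refine Set.ncard_le_ncard ?_
  rintro ⟨u, v⟩ ⟨huv, hX⟩
  refine Finset.mem_coe.2 (Finset.mem_image.2 ⟨(u, v), ?_, rfl⟩)
  exact Finset.mem_offDiag.2 ⟨hX u (Sym2.mem_mk_left u v), hX v (Sym2.mem_mk_right u v), huv.ne⟩

lemma IsOrientation.inDegree_lt_card {W : Type*} {H : SimpleGraph W} {D : W → W → Prop}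
    (hD : IsOrientation H D) {X : Finset W} {v : W} (hv : v ∈ X)
    (hX : ∀ a, D a v → a ∈ X) : inDegree D v < X.card := by
  have hnot_self : ¬ D v v := fun h => H.irrefl (hD.1 v v h)
  rw [inDegree, ← Set.ncard_coe_finset]
  exact Set.ncard_lt_ncard ⟨hX, fun hsub => hnot_self (hsub hv)⟩

section Finite

variable {V : Type*} [Finite V] {H : SimpleGraph V} {D : V → V → Prop}

lemma IsOrientation.sum_inDegree_le_inducedEdgeCount (hD : IsOrientation H D) {B X : Finset V}
    (hBX : B ⊆ X) (hclosed : ∀ a, ∀ b ∈ B, D a b → a ∈ X) :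
    ∑ b ∈ B, inDegree D b ≤ inducedEdgeCount H X := by
  classical
  have hcard : ∑ b ∈ B, inDegree D b =
      (B.sigma fun b => {a | D a b}.toFinite.toFinset).card := by
    simp only [Finset.card_sigma, inDegree, Set.ncard_eq_toFinset_card _ (Set.toFinite _)]
  rw [hcard, ← Set.ncard_coe_finset, inducedEdgeCount]
  refine Set.ncard_le_ncard_of_injOn (fun p => s(p.2, p.1)) ?_ ?_
  · rintro ⟨b, a⟩ hp
    obtain ⟨hb, hab⟩ : b ∈ B ∧ D a b := by simpa using hp
    refine ⟨hD.1 a b hab, fun x hx => ?_⟩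
    rcases Sym2.mem_iff.1 hx with rfl | rfl
    exacts [hclosed _ b hb hab, hBX hb]
  · rintro ⟨b, a⟩ hp ⟨b', a'⟩ hp' heq
    have hab : D a b := by simpa using (Finset.mem_sigma.1 hp).2
    have hab' : D a' b' := by simpa using (Finset.mem_sigma.1 hp').2
    rcases Sym2.eq_iff.1 heq with ⟨rfl, rfl⟩ | ⟨rfl, rfl⟩
    · rfl
    · exact absurd hab' (hD.asymm_s8 hab)

/-- Hall's theorem, matching `m v` copies of each vertex `v` to edges at `v`. -/
lemma exists_injective_mem_incidenceSet {m : V → ℕ}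
    (hm : ∀ X : Finset V,
      ∑ v ∈ X, m v + inducedEdgeCount H ((X : Set V)ᶜ) ≤ H.edgeSet.ncard) :
    ∃ f : (Σ v, Fin (m v)) → Sym2 V, Function.Injective f ∧ ∀ p, f p ∈ H.incidenceSet p.1 := by
  classical
  let t : (Σ v, Fin (m v)) → Finset (Sym2 V) := fun p => (H.incidenceSet p.1).toFinite.toFinset
  suffices hall : ∀ F : Finset (Σ v, Fin (m v)), F.card ≤ (F.biUnion t).card by
    obtain ⟨f, hinj, hf⟩ := (Finset.all_card_le_biUnion_card_iff_exists_injective t).1 hall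
    exact ⟨f, hinj, fun p => (Set.Finite.mem_toFinset _).1 (hf p)⟩
  intro F
  set X : Finset V := F.image Sigma.fst
  have hF : F.card ≤ ∑ v ∈ X, m v := by
    have hsub : F ⊆ X.sigma fun _ => Finset.univ := fun p hp =>
      Finset.mem_sigma.2 ⟨Finset.mem_image_of_mem _ hp, Finset.mem_univ _⟩
    simpa using Finset.card_le_card hsub
  have hcover : H.edgeSet ⊆ F.biUnion t ∪ {e ∈ H.edgeSet | ∀ x ∈ e, x ∈ (X : Set V)ᶜ} := by
    intro e he
    by_cases hmeets : ∃ x ∈ e, x ∈ X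
    · obtain ⟨x, hxe, hxX⟩ := hmeets
      obtain ⟨p, hp, rfl⟩ := Finset.mem_image.1 hxX
      exact Or.inl (Finset.mem_coe.2
        (Finset.mem_biUnion.2 ⟨p, hp, (Set.Finite.mem_toFinset _).2 ⟨he, hxe⟩⟩))
    · exact Or.inr ⟨he, fun x hxe hxX => hmeets ⟨x, hxe, hxX⟩⟩
  have hedges : H.edgeSet.ncard ≤ (F.biUnion t).card + inducedEdgeCount H ((X : Set V)ᶜ) := by
    rw [inducedEdgeCount, ← Set.ncard_coe_finset]
    exact (Set.ncard_le_ncard hcover).trans (Set.ncard_union_le _ _)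
  have hX := hm X
  omega

lemma exists_isOrientation_le_inDegree {m : V → ℕ}
    (hm : ∀ X : Finset V,
      ∑ v ∈ X, m v + inducedEdgeCount H ((X : Set V)ᶜ) ≤ H.edgeSet.ncard) :
    ∃ D : V → V → Prop, IsOrientation H D ∧ ∀ v, m v ≤ inDegree D v := by
  obtain ⟨f, hinj, hf⟩ := exists_injective_mem_incidenceSet hm
  -- The edge matched to a copy of `v` is directed towards `v`.
  obtain ⟨D, hD, hext⟩ := exists_isOrientation_extending (G := H)
    (D := fun u v => ∃ i, f ⟨v, i⟩ = s(u, v))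
    (by
      rintro u v ⟨i, hi⟩
      exact H.mem_edgeSet.1 (hi ▸ (hf ⟨v, i⟩).1))
    (by
      rintro u v ⟨i, hi⟩ ⟨j, hj⟩
      have huv : H.Adj u v := H.mem_edgeSet.1 (hi ▸ (hf ⟨v, i⟩).1)
      have hslot := hinj (hi.trans (Sym2.eq_swap.trans hj.symm))
      exact huv.ne' (congrArg Sigma.fst hslot))
  refine ⟨D, hD, fun v => ?_⟩
  choose tail htail using fun i => Sym2.mem_iff_exists.1 (hf ⟨v, i⟩).2
  have htail_inj : Function.Injective tail := fun i j hij => by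
    have hslot : f ⟨v, i⟩ = f ⟨v, j⟩ := by rw [htail i, htail j, hij]
    exact eq_of_heq (Sigma.mk.inj (hinj hslot)).2
  calc m v = (Set.range tail).ncard := by
        rw [← Set.image_univ, Set.ncard_image_of_injective _ htail_inj, Set.ncard_univ,
          Nat.card_fin]
    _ ≤ inDegree D v := Set.ncard_le_ncard <| Set.range_subset_iff.2 fun i =>
        hext (tail i) v ⟨i, (htail i).trans Sym2.eq_swap⟩

end Finite

/-- The counts of a minimally rigid graph in `ℝᵈ` (Maxwell's condition): `d|V| - C(d+1, 2)` edges
in total, and at most `d|X| - C(d+1, 2)` edges inside each vertex set `X` with `|X| ≥ d`. The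
binomial coefficient is moved to the other side to avoid truncated subtraction. -/
structure IsMaxwellTight {V : Type*} [Fintype V] (d : ℕ) (H : SimpleGraph V) : Prop where
  ncard_edgeSet : H.edgeSet.ncard + (d + 1).choose 2 = d * Fintype.card V
  inducedEdgeCount_le : ∀ X : Set V, d ≤ X.ncard →
    inducedEdgeCount H X + (d + 1).choose 2 ≤ d * X.ncard

namespace IsMaxwellTight

variable {V : Type*} [Fintype V] [DecidableEq V] {d : ℕ} {H : SimpleGraph V} {Z : Finset V}

lemma inducedEdgeCount_add_choose_le (hH : IsMaxwellTight d H) (hZ : Z.card = (d + 1).choose 2)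
    (Y : Finset V) :
    inducedEdgeCount H Y + (d + 1).choose 2 ≤ d * Y.card + (Z \ Y).card := by
  rcases le_or_gt d Y.card with hlarge | hsmall
  · have hsparse := hH.inducedEdgeCount_le Y (by rwa [Set.ncard_coe_finset])
    rw [Set.ncard_coe_finset] at hsparse
    omega
  · have hedges : inducedEdgeCount H Y + Y.card ≤ (Y.card + 1).choose 2 := by
      rw [Nat.choose_succ_succ' Y.card 1, Nat.choose_one_right, add_comm]
      exact Nat.add_le_add_left (inducedEdgeCount_le_choose_two_s8 Y) _
    have htwice := add_one_choose_two_mul_two Y.card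
    have hmul : (Y.card + 1) * Y.card ≤ d * Y.card := Nat.mul_le_mul_right _ hsmall
    have hdiff : Z.card ≤ (Z \ Y).card + Y.card := Finset.card_le_card_sdiff_add_card
    omega

lemma exists_isOrientation_le_inDegree_add (hH : IsMaxwellTight d H) (hd : 0 < d)
    (hZ : Z.card = (d + 1).choose 2) :
    ∃ D : V → V → Prop, IsOrientation H D ∧
      ∀ v, d ≤ inDegree D v + if v ∈ Z then 1 else 0 := by
  suffices hdemand : ∀ X : Finset V, ∑ v ∈ X, (d - if v ∈ Z then 1 else 0) +
      inducedEdgeCount H ((X : Set V)ᶜ) ≤ H.edgeSet.ncard by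
    obtain ⟨D, hD, hin⟩ := exists_isOrientation_le_inDegree hdemand
    exact ⟨D, hD, fun v => Nat.sub_le_iff_le_add.1 (hin v)⟩
  intro X
  have hsum : ∑ v ∈ X, (d - if v ∈ Z then 1 else 0) + (X ∩ Z).card = d * X.card := by
    rw [Finset.card_eq_sum_ones, ← Finset.sum_ite_mem, ← Finset.sum_add_distrib, mul_comm,
      ← smul_eq_mul, ← Finset.sum_const]
    refine Finset.sum_congr rfl fun v _ => Nat.sub_add_cancel ?_
    split_ifs <;> omega
  have hcompl := hH.inducedEdgeCount_add_choose_le hZ Xᶜ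
  rw [Finset.coe_compl, sdiff_compl, Finset.inf_eq_inter, Finset.inter_comm] at hcompl
  have htotal : d * X.card + d * Xᶜ.card = d * Fintype.card V := by
    rw [← mul_add, Finset.card_add_card_compl]
  have hedges := hH.ncard_edgeSet
  omega

lemma exists_arc_into (hH : IsMaxwellTight d H) (hZ : Z.card = (d + 1).choose 2)
    {D : V → V → Prop} (hD : IsOrientation H D)
    (hin : ∀ v, d ≤ inDegree D v + if v ∈ Z then 1 else 0)
    {S B : Finset V} (hB : B.Nonempty) (hS : d * S.card < (Z \ B).card) :
    ∃ a, a ∉ B ∪ S ∧ ∃ b ∈ B, D a b := by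
  by_contra! hno_arc
  have hclosed (a b : V) (hb : b ∈ B) (hab : D a b) : a ∈ B ∪ S :=
    not_not.1 fun ha => hno_arc a ha b hb hab
  rcases lt_or_ge (B ∪ S).card d with hsmall | hlarge
  · obtain ⟨b, hb⟩ := hB
    have hdeg := hD.inDegree_lt_card (Finset.mem_union_left S hb) (hclosed · b hb)
    have hdeg' : d ≤ inDegree D b + 1 :=
      (hin b).trans (Nat.add_le_add_left (by split_ifs <;> omega) _)
    omega
  · have hcount : d * B.card ≤ inducedEdgeCount H (B ∪ S : Finset V) + (B ∩ Z).card := calc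
      d * B.card = ∑ _b ∈ B, d := by rw [Finset.sum_const, smul_eq_mul, mul_comm]
      _ ≤ ∑ b ∈ B, (inDegree D b + if b ∈ Z then 1 else 0) := Finset.sum_le_sum fun b _ => hin b
      _ = ∑ b ∈ B, inDegree D b + (B ∩ Z).card := by
        rw [Finset.sum_add_distrib, Finset.sum_ite_mem, ← Finset.card_eq_sum_ones]
      _ ≤ _ := Nat.add_le_add_right
        (hD.sum_inDegree_le_inducedEdgeCount Finset.subset_union_left hclosed) _
    have hsparse := hH.inducedEdgeCount_le (B ∪ S : Finset V) (by rwa [Set.ncard_coe_finset])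
    rw [Set.ncard_coe_finset] at hsparse
    have hunion : d * (B ∪ S).card ≤ d * B.card + d * S.card := by
      rw [← mul_add]
      exact Nat.mul_le_mul_left d (Finset.card_union_le B S)
    have hsplit := Finset.card_inter_add_card_sdiff Z B
    rw [Finset.inter_comm] at hsplit
    omega

lemma exists_arc_across {G₁ G₂ : SimpleGraph V} (hG₁ : IsMaxwellTight d G₁)
    (hG₂ : IsMaxwellTight d G₂) (hZ : Z.card = (d + 1).choose 2) {D₁ D₂ : V → V → Prop}
    (hD₁ : IsOrientation G₁ D₁) (hD₂ : IsOrientation G₂ D₂)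
    (hin₁ : ∀ v, d ≤ inDegree D₁ v + if v ∈ Z then 1 else 0)
    (hin₂ : ∀ v, d ≤ inDegree D₂ v + if v ∈ Z then 1 else 0)
    {A B S : Finset V} (hA : A.Nonempty) (hB : B.Nonempty) (hAB : Disjoint A B)
    (hpartition : ∀ x, x ∈ A ∨ x ∈ B ↔ x ∉ S) (hS : 2 * (d * S.card) < (d + 1).choose 2) :
    (∃ a ∈ A, ∃ b ∈ B, D₁ a b) ∨ ∃ b ∈ B, ∃ a ∈ A, D₂ b a := by
  have hcover : Z \ A ∪ Z \ B = Z := by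
    rw [← Finset.sdiff_inter_distrib_right, Finset.disjoint_iff_inter_eq_empty.1 hAB,
      Finset.sdiff_empty]
  have hcard : Z.card ≤ (Z \ A).card + (Z \ B).card := by
    simpa only [hcover] using Finset.card_union_le (Z \ A) (Z \ B)
  rcases lt_or_ge (d * S.card) (Z \ B).card with hZB | hZB
  · obtain ⟨a, ha, b, hb, hab⟩ := hG₁.exists_arc_into hZ hD₁ hin₁ hB hZB
    rw [Finset.mem_union, not_or, ← hpartition] at ha
    exact Or.inl ⟨a, ha.2.resolve_right ha.1, b, hb, hab⟩
  · obtain ⟨b, hb, a, ha, hba⟩ := hG₂.exists_arc_into hZ hD₂ hin₂ (S := S) hA (by omega)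
    rw [Finset.mem_union, not_or, ← hpartition] at hb
    exact Or.inr ⟨b, hb.2.resolve_left hb.1, a, ha, hba⟩

end IsMaxwellTight

theorem orientation_from_two_rigid_subgraphs_general {V : Type*} [Fintype V] (k d : ℕ)
    (hd : 2 ≤ d) (hkd : 4 * k ≤ d + 4) (G G₁ G₂ : SimpleGraph V)
    (hV : (d + 1).choose 2 ≤ Fintype.card V) (hsub₁ : G₁ ≤ G) (hsub₂ : G₂ ≤ G)
    (hdisj : Disjoint G₁.edgeSet G₂.edgeSet)
    (htight₁ : IsMaxwellTight d G₁) (htight₂ : IsMaxwellTight d G₂) :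
    ∃ D : V → V → Prop, IsOrientation G D ∧ DKConnected D k := by
  classical
  obtain ⟨Z, -, hZ⟩ := Finset.exists_subset_card_eq (s := (Finset.univ : Finset V)) hV
  obtain ⟨D₁, hD₁, hin₁⟩ := htight₁.exists_isOrientation_le_inDegree_add (by omega) hZ
  obtain ⟨D₂, hD₂, hin₂⟩ := htight₂.exists_isOrientation_le_inDegree_add (by omega) hZ
  obtain ⟨D, hD, hforward, hbackward⟩ :=
    exists_isOrientation_extending_forward_backward hsub₁ hsub₂ hdisj hD₁ hD₂
  have hchoose := add_one_choose_two_mul_two d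
  refine ⟨D, hD, by rw [Nat.card_eq_fintype_card]; nlinarith, fun S _ hSk =>
    stronglyConnectedOutside_of_forall_cut fun A B hA hB hAB hABS => ?_⟩
  lift S to Finset V using S.toFinite
  lift A to Finset V using A.toFinite
  lift B to Finset V using B.toFinite
  rw [Finset.coe_nonempty] at hA hB
  rw [Finset.disjoint_coe] at hAB
  have hpartition (x : V) : x ∈ A ∨ x ∈ B ↔ x ∉ S := by simpa using Set.ext_iff.1 hABS x
  have hS : 2 * (d * S.card) < (d + 1).choose 2 := by
    rw [Set.ncard_coe_finset] at hSk
    nlinarith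
  rcases htight₁.exists_arc_across htight₂ hZ hD₁ hD₂ hin₁ hin₂ hA hB hAB hpartition hS with
    ⟨a, ha, b, hb, hab⟩ | ⟨b, hb, a, ha, hba⟩
  · exact ⟨a, ha, b, hb, hforward a b hab⟩
  · exact ⟨a, ha, b, hb, hbackward b a hba⟩

/-- Let `k ≥ 2` and `d = 4k − 4`. If a finite simple graph `G` with `|V| ≥ C(d+1,2)`
contains two edge-disjoint spanning subgraphs `G₁`, `G₂`, each with exactly
`d|V| − C(d+1,2)` edges and satisfying `i_{G_i}(X) ≤ d|X| − C(d+1,2)` for every `X ⊆ V`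
with `|X| ≥ d`, then `G` has a `k`-connected orientation. -/
theorem orientation_from_two_rigid_subgraphs {V : Type*} [Fintype V] (k d : ℕ)
    (hk : 2 ≤ k) (hd : d + 4 = 4 * k)
    (G G₁ G₂ : SimpleGraph V)
    (hV : (d + 1).choose 2 ≤ Fintype.card V)
    (hsub₁ : G₁ ≤ G) (hsub₂ : G₂ ≤ G)
    (hdisj : Disjoint G₁.edgeSet G₂.edgeSet)
    (hE₁ : G₁.edgeSet.ncard + (d + 1).choose 2 = d * Fintype.card V)
    (hE₂ : G₂.edgeSet.ncard + (d + 1).choose 2 = d * Fintype.card V)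
    (hsparse₁ : ∀ X : Set V, d ≤ X.ncard →
      inducedEdgeCount G₁ X + (d + 1).choose 2 ≤ d * X.ncard)
    (hsparse₂ : ∀ X : Set V, d ≤ X.ncard →
      inducedEdgeCount G₂ X + (d + 1).choose 2 ≤ d * X.ncard) :
    ∃ D : V → V → Prop, IsOrientation G D ∧ DKConnected D k := by
  exact orientation_from_two_rigid_subgraphs_general k d (by omega) (by omega) G G₁ G₂ hV
    hsub₁ hsub₂ hdisj ⟨hE₁, hsparse₁⟩ ⟨hE₂, hsparse₂⟩
end

section
/- Let G = (V, E) be a finite simple graph and let k₀, ℓ, D be positive integers satisfying k₀² + k₀(1 − D(D+1)) − ℓ(ℓ+1) ≥ 0. Suppose that every vertex of G has degree at least k₀, that for every v ∈ V the neighborhood N_G(v) does not induce a clique in G, and that for every v ∈ V any two distinct maximal cliques of the induced subgraph G[N_G(v)] have at most ℓ − 2 vertices in common. For an ordering π of V and v ∈ V, let N←π(v) be the set of neighbors of v that precede v in π, let deg←π(v) = |N←π(v)|, and define h_π(v) = min(D, deg←π(v)) + 1 if deg←π(v) ≥ D + 1 and N←π(v) does not induce a clique in G, and h_π(v) = min(D,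 deg←π(v)) otherwise. Then the average over all |V|! orderings π of V of the sum ∑_{v ∈ V} h_π(v) is at least D·|V|. -/
/-- The set of neighbors of `v` in `G` that precede `v` in the ordering `π`. -/
def backNeighbors {W : Type*} {n : ℕ} (G : SimpleGraph W) (π : W ≃ Fin n) (v : W) :
    Set W :=
  {u | G.Adj u v ∧ π u < π v}

open Classical in
/-- The quantity `h_π(v)`: it equals `min(D, deg←π(v)) + 1` if `deg←π(v) ≥ D + 1` and the
set of neighbors of `v` preceding `v` in `π` does not induce a clique in `G`, and
`min(D, deg←π(v))` otherwise. -/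
noncomputable def hOrd {W : Type*} {n : ℕ} (G : SimpleGraph W) (D : ℕ) (π : W ≃ Fin n)
    (v : W) : ℕ :=
  min D (backNeighbors G π v).ncard +
    if D + 1 ≤ (backNeighbors G π v).ncard ∧ ¬ G.IsClique (backNeighbors G π v) then 1
    else 0

/-- `s` is a maximal clique of the subgraph of `G` induced by `N`. -/
def IsMaxCliqueIn {W : Type*} (G : SimpleGraph W) (N : Set W) (s : Set W) : Prop :=
  G.IsClique s ∧ s ⊆ N ∧ ∀ t : Set W, G.IsClique t → t ⊆ N → s ⊆ t → s = t

/-!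
Fix a vertex `v` of degree `d` with neighborhood `N`, let `b` be the number of neighbors preceding
`v` in a uniformly random ordering, and let `u, w ∈ N` be distinct and nonadjacent. The number `b`
is uniform on `{0, …, d}`, and given `b`, the vertex `u` precedes `v` with probability `b / d`.

Suppose that distinct maximal cliques of `G[N]` share fewer than `ℓ` vertices and that `b > ℓ`. If
`u` precedes `v` and the preceding neighbors form a clique, then exchanging `u` with `w` in the
ordering destroys the clique: otherwise two distinct maximal cliques of `G[N]` would share the
`b - 1` preceding neighbors other than `u`. Hence the preceding neighbors fail to form a clique with
probability at least `b / d`. With `L = max ℓ D` the expectation of `h_π(v)` is therefore at least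
`(∑ i ≤ d, min D i + ∑ L < i ≤ d, i / d) / (d + 1)
  = D - D (D + 1) / (2 (d + 1)) + (d (d + 1) - L (L + 1)) / (2 d (d + 1))`,
which is at least `D` exactly when `d D (D + 1) + L (L + 1) ≤ d (d + 1)`.
-/

open Finset
open scoped BigOperators

section Orderings

variable {V ι : Type*} [LinearOrder ι]

/-- The elements of `S` that come before `x` in the ordering `π`. It is defined for every finite set
`S`, so that the same notion measures the rank of `v` among its neighbors and the ranks of the
elements of `insert v S` among each other. -/
def before (π : V ≃ ι) (S : Finset V) (x : V) : Finset V := {y ∈ S | π y < π x}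

theorem mem_before {π : V ≃ ι} {S : Finset V} {x y : V} :
    y ∈ before π S x ↔ y ∈ S ∧ π y < π x :=
  mem_filter

theorem before_subset (π : V ≃ ι) (S : Finset V) (x : V) : before π S x ⊆ S :=
  filter_subset _ _

theorem before_insert_self [DecidableEq V] (π : V ≃ ι) (S : Finset V) (x : V) :
    before π (insert x S) x = before π S x := by
  simp only [before, filter_insert, lt_irrefl, if_false]

theorem before_perm_trans (σ : Equiv.Perm V) (π : V ≃ ι) (S : Finset V) (x : V) :
    before (σ.trans π) S x =
      (before π (S.map σ.toEmbedding) (σ x)).map σ.symm.toEmbedding := by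
  ext y
  simp [mem_before]

theorem map_swap_of_mem [DecidableEq V] {S : Finset V} {u w : V} (hu : u ∈ S) (hw : w ∈ S) :
    S.map (Equiv.swap u w).toEmbedding = S :=
  map_perm fun x hx ↦ by
    by_contra hxS
    exact hx (Equiv.swap_apply_of_ne_of_ne
      (ne_of_mem_of_not_mem hu hxS).symm (ne_of_mem_of_not_mem hw hxS).symm)

theorem before_swap_trans [DecidableEq V] {S : Finset V} {u w : V} (hu : u ∈ S) (hw : w ∈ S)
    (π : V ≃ ι) (x : V) :
    before ((Equiv.swap u w).trans π) S x =
      (before π S (Equiv.swap u w x)).map (Equiv.swap u w).toEmbedding := by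
  rw [before_perm_trans, map_swap_of_mem hu hw, Equiv.symm_swap]

theorem before_swap_trans_of_notMem [DecidableEq V] {S : Finset V} {u w v : V} (hu : u ∈ S)
    (hw : w ∈ S) (hv : v ∉ S) (π : V ≃ ι) :
    before ((Equiv.swap u w).trans π) S v =
      (before π S v).map (Equiv.swap u w).toEmbedding := by
  rw [before_swap_trans hu hw, Equiv.swap_apply_of_ne_of_ne
    (ne_of_mem_of_not_mem hu hv).symm (ne_of_mem_of_not_mem hw hv).symm]

theorem sum_card_before {M : Type*} [AddCommMonoid M] (π : V ≃ ι) (S : Finset V) (f : ℕ → M) :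
    ∑ x ∈ S, f #(before π S x) = ∑ i ∈ range #S, f i := by
  classical
  induction S using Finset.induction_on_max_value π with
  | empty => simp
  | insert a S ha hmax ih =>
    have before_old : ∀ x ∈ S, before π (insert a S) x = before π S x := fun x hx ↦ by
      simp only [before, filter_insert, (hmax x hx).not_gt, if_false]
    have before_new : before π S a = S :=
      filter_true_of_mem fun x hx ↦
        (hmax x hx).lt_of_ne (π.injective.ne (ne_of_mem_of_not_mem hx ha))
    rw [sum_insert ha, before_insert_self, before_new,
      sum_congr rfl fun x hx ↦ congrArg (f #·) (before_old x hx), ih, card_insert_of_notMem ha,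
      sum_range_succ, add_comm]

end Orderings

section RandomOrderings

variable {V ι M : Type*} [Fintype V] [DecidableEq V] [Fintype ι] [LinearOrder ι]
  [AddCommMonoid M] [Module ℚ≥0 M]

theorem expect_perm_trans (σ : Equiv.Perm V) (F : (V ≃ ι) → M) :
    𝔼 π, F (σ.trans π) = 𝔼 π, F π :=
  Fintype.expect_equiv (Equiv.equivCongr σ.symm (Equiv.refl ι)) _ _ fun _ ↦ rfl

/-- All elements of `insert v N` have the same rank distribution, and in each ordering their ranks
are `0, …, #N` in some order. -/
theorem expect_card_before [Nonempty (V ≃ ι)] {N : Finset V} {v : V} (hv : v ∉ N) (f : ℕ → M) :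
    𝔼 π : V ≃ ι, f #(before π N v) = 𝔼 i ∈ range (#N + 1), f i := by
  have exchangeable : ∀ x ∈ insert v N,
      𝔼 π : V ≃ ι, f #(before π (insert v N) x) = 𝔼 π : V ≃ ι, f #(before π N v) := by
    intro x hx
    rw [← expect_perm_trans (Equiv.swap v x)]
    simp only [before_swap_trans (mem_insert_self v N) hx, card_map, Equiv.swap_apply_right,
      before_insert_self]
  calc 𝔼 π : V ≃ ι, f #(before π N v)
      = 𝔼 x ∈ insert v N, 𝔼 π : V ≃ ι, f #(before π (insert v N) x) := by
        rw [expect_congr rfl exchangeable, expect_const (insert_nonempty v N)]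
    _ = 𝔼 π : V ≃ ι, 𝔼 x ∈ insert v N, f #(before π (insert v N) x) := expect_comm ..
    _ = 𝔼 _π : V ≃ ι, 𝔼 i ∈ range (#N + 1), f i := by
        simp only [expect, sum_card_before, card_range, card_insert_of_notMem hv]
    _ = 𝔼 i ∈ range (#N + 1), f i := Fintype.expect_const _

theorem expect_ite_mem_before {K : Type*} [Semifield K] [CharZero K] [Nonempty (V ≃ ι)]
    {N : Finset V} {u v : V} (hu : u ∈ N) (hv : v ∉ N) (g : ℕ → K) :
    𝔼 π : V ≃ ι, (if u ∈ before π N v then g #(before π N v) else 0) =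
      𝔼 i ∈ range (#N + 1), i / #N * g i := by
  have exchangeable : ∀ x ∈ N,
      𝔼 π : V ≃ ι, (if x ∈ before π N v then g #(before π N v) else 0) =
        𝔼 π : V ≃ ι, (if u ∈ before π N v then g #(before π N v) else 0) := by
    intro x hx
    rw [← expect_perm_trans (Equiv.swap u x)]
    simp only [before_swap_trans_of_notMem hu hx hv, card_map, mem_map_equiv, Equiv.symm_swap,
      Equiv.swap_apply_right]
  rw [← expect_card_before (ι := ι) hv (fun i ↦ i / #N * g i)]
  calc 𝔼 π : V ≃ ι, (if u ∈ before π N v then g #(before π N v) else 0)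
      = 𝔼 x ∈ N, 𝔼 π : V ≃ ι, (if x ∈ before π N v then g #(before π N v) else 0) := by
        rw [expect_congr rfl exchangeable, expect_const ⟨u, hu⟩]
    _ = 𝔼 π : V ≃ ι, 𝔼 x ∈ N, (if x ∈ before π N v then g #(before π N v) else 0) :=
        expect_comm ..
    _ = 𝔼 π : V ≃ ι, #(before π N v) / #N * g #(before π N v) := by
        refine expect_congr rfl fun π _ ↦ ?_
        rw [expect_eq_sum_div_card, sum_ite_mem, inter_eq_right.2 (before_subset π N v), sum_const,
          nsmul_eq_mul, mul_div_right_comm]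

end RandomOrderings

section Cliques

variable {V : Type*} {G : SimpleGraph V} {N : Set V}

/-- Any two distinct maximal cliques of `G[N]` have fewer than `ℓ` vertices in common. This limits
which vertices of a clique can be exchanged. It is meant for finite `N`: an infinite intersection
has `ncard` equal to `0`. -/
def MaxCliqueOverlapLT (G : SimpleGraph V) (N : Set V) (ℓ : ℕ) : Prop :=
  ∀ H₁ H₂ : Set V, H₁ ≠ H₂ → IsMaxCliqueIn G N H₁ → IsMaxCliqueIn G N H₂ → (H₁ ∩ H₂).ncard < ℓ

theorem MaxCliqueOverlapLT.mono {ℓ L : ℕ} (h : MaxCliqueOverlapLT G N ℓ) (hℓL : ℓ ≤ L) :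
    MaxCliqueOverlapLT G N L :=
  fun H₁ H₂ hne hH₁ hH₂ ↦ (h H₁ H₂ hne hH₁ hH₂).trans_le hℓL

theorem exists_isMaxCliqueIn_superset (hN : N.Finite) {A : Set V} (hA : G.IsClique A)
    (hAN : A ⊆ N) : ∃ H, A ⊆ H ∧ IsMaxCliqueIn G N H := by
  obtain ⟨H, hAH, hH⟩ := (hN.finite_subsets.subset fun _ h ↦ h.2 :
    {t : Set V | G.IsClique t ∧ t ⊆ N}.Finite).exists_le_maximal ⟨hA, hAN⟩
  exact ⟨H, hAH, hH.prop.1, hH.prop.2, fun t ht htN hHt ↦ hH.eq_of_le ⟨ht, htN⟩ hHt⟩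

theorem MaxCliqueOverlapLT.ncard_inter_lt {ℓ : ℕ} (h : MaxCliqueOverlapLT G N ℓ) (hN : N.Finite)
    {A B : Set V} (hA : G.IsClique A) (hAN : A ⊆ N) (hB : G.IsClique B) (hBN : B ⊆ N) {u w : V}
    (hu : u ∈ A) (hw : w ∈ B) (hne : u ≠ w) (hadj : ¬ G.Adj u w) : (A ∩ B).ncard < ℓ := by
  obtain ⟨H₁, hAH₁, hH₁⟩ := exists_isMaxCliqueIn_superset hN hA hAN
  obtain ⟨H₂, hBH₂, hH₂⟩ := exists_isMaxCliqueIn_superset hN hB hBN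
  have hH : H₁ ≠ H₂ := by
    rintro rfl
    exact hadj (hH₁.1 (hAH₁ hu) (hBH₂ hw) hne)
  calc (A ∩ B).ncard ≤ (H₁ ∩ H₂).ncard :=
        Set.ncard_le_ncard (Set.inter_subset_inter hAH₁ hBH₂) (hN.subset fun _ h ↦ hH₁.2.1 h.1)
    _ < ℓ := h H₁ H₂ hH hH₁ hH₂

theorem MaxCliqueOverlapLT.pos {ℓ : ℕ} (h : MaxCliqueOverlapLT G N ℓ) (hfin : N.Finite)
    (hN : ¬ G.IsClique N) : 0 < ℓ := by
  obtain ⟨⟨u, hu⟩, ⟨w, hw⟩, hne, hadj⟩ := G.not_isClique_iff.1 hN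
  exact Nat.zero_lt_of_lt <| h.ncard_inter_lt hfin (G.isClique_singleton u)
    (Set.singleton_subset_iff.2 hu) (G.isClique_singleton w) (Set.singleton_subset_iff.2 hw)
    rfl rfl (Subtype.coe_ne_coe.2 hne) hadj

theorem MaxCliqueOverlapLT.not_isClique_image_swap [DecidableEq V] {ℓ : ℕ}
    (h : MaxCliqueOverlapLT G N ℓ) (hN : N.Finite) {A : Set V} (hA : G.IsClique A) (hAN : A ⊆ N)
    (hcard : ℓ < A.ncard) {u w : V} (hu : u ∈ A) (hw : w ∈ N) (hne : u ≠ w)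
    (hadj : ¬ G.Adj u w) : ¬ G.IsClique (Equiv.swap u w '' A) := by
  intro hB
  have hwA : w ∉ A := fun hwA ↦ hadj (hA hu hwA hne)
  rw [Equiv.image_swap_of_mem_of_notMem hu hwA] at hB
  have hBN : insert w A \ {u} ⊆ N := Set.sdiff_subset.trans (Set.insert_subset hw hAN)
  have overlap_lt := h.ncard_inter_lt hN hA hAN hB hBN hu
    ⟨Set.mem_insert w A, hne.symm⟩ hne hadj
  have le_overlap : (A \ {u}).ncard ≤ (A ∩ (insert w A \ {u})).ncard :=
    Set.ncard_le_ncard (fun x hx ↦ ⟨hx.1, Or.inr hx.1, hx.2⟩) (hN.subset fun _ h ↦ hAN h.1)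
  have card_A := Set.ncard_sdiff_singleton_add_one hu (hN.subset hAN)
  lia

end Cliques

section RandomCliques

variable {V ι : Type*} [Fintype V] [DecidableEq V] [Fintype ι] [LinearOrder ι]
  {G : SimpleGraph V} [DecidableRel G.Adj] {N : Finset V} {L : ℕ}

/-- Among the orderings with `L < #(before π N v)`, exchanging `u` with `w` maps those that have `u`
before `v` and a clique before `v` injectively to those that have neither. -/
theorem card_mem_before_le_card_not_isClique_before
    (h : MaxCliqueOverlapLT G (N : Set V) L) {u w v : V} (hu : u ∈ N) (hw : w ∈ N) (hv : v ∉ N)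
    (hne : u ≠ w) (hadj : ¬ G.Adj u w) :
    #{π : V ≃ ι | u ∈ before π N v ∧ L < #(before π N v)} ≤
      #{π : V ≃ ι | ¬ G.IsClique (before π N v : Set V) ∧ L < #(before π N v)} := by
  rw [← card_sdiff_le_card_sdiff_iff]
  refine card_le_card_of_injOn ((Equiv.swap u w).trans ·) (fun π hπ ↦ ?_)
    ((Equiv.equivCongr (Equiv.swap u w).symm (Equiv.refl ι)).injective.injOn)
  simp only [coe_sdiff, coe_filter, mem_univ, true_and, Set.mem_sdiff, Set.mem_ofPred_eq, not_and,
    before_swap_trans_of_notMem hu hw hv, card_map, mem_map_equiv, Equiv.symm_swap,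
    Equiv.swap_apply_left, coe_map, Equiv.coe_toEmbedding] at hπ ⊢
  obtain ⟨⟨hu_before, hL⟩, not_isClique_imp⟩ := hπ
  have isClique_before : G.IsClique (before π N v : Set V) := by
    by_contra hclique
    exact not_isClique_imp hclique hL
  have hw_before : w ∉ before π N v := fun hw_before ↦
    hadj (isClique_before hu_before hw_before hne)
  have not_isClique := h.not_isClique_image_swap N.finite_toSet isClique_before
    (coe_subset.2 (before_subset π N v)) (by rwa [Set.ncard_coe_finset]) hu_before hw hne hadj
  exact ⟨⟨not_isClique, hL⟩, fun hmem ↦ absurd hmem hw_before⟩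

theorem expect_range_le_expect_not_isClique_before [Nonempty (V ≃ ι)] {v : V}
    (hv : v ∉ N) (hN : ¬ G.IsClique (N : Set V)) (h : MaxCliqueOverlapLT G (N : Set V) L) :
    𝔼 i ∈ range (#N + 1), (i : ℚ) / #N * (if L < i then 1 else 0) ≤
      𝔼 π : V ≃ ι,
        if ¬ G.IsClique (before π N v : Set V) ∧ L < #(before π N v) then (1 : ℚ) else 0 := by
  obtain ⟨⟨u, hu⟩, ⟨w, hw⟩, hne, hadj⟩ := G.not_isClique_iff.1 hN
  rw [← expect_ite_mem_before (ι := ι) (mem_coe.1 hu) hv]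
  simp only [← ite_and, Fintype.expect_eq_sum_div_card, sum_boole]
  gcongr ?_ / _
  exact mod_cast card_mem_before_le_card_not_isClique_before (ι := ι) h hu hw hv
    (Subtype.coe_ne_coe.2 hne) hadj

end RandomCliques

section Arithmetic

theorem sum_range_ite_lt_mul_two_add {L d : ℕ} (h : L ≤ d) :
    (∑ i ∈ range (d + 1), if L < i then i else 0) * 2 + L * (L + 1) = d * (d + 1) := by
  induction d, h using Nat.le_induction with
  | base =>
    rw [sum_eq_zero fun i hi ↦ if_neg (by simpa [Nat.lt_succ_iff] using hi), zero_mul, zero_add]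
  | succ d hd ih =>
    rw [sum_range_succ, if_pos (Nat.lt_succ_of_le hd)]
    linarith

theorem sum_range_min_mul_two_add {D d : ℕ} (h : D ≤ d) :
    (∑ i ∈ range (d + 1), min D i) * 2 + D * (D + 1) = 2 * D * (d + 1) := by
  induction d, h using Nat.le_induction with
  | base =>
    rw [sum_congr rfl fun i hi ↦ min_eq_right (Nat.le_of_lt_add_one (mem_range.1 hi)),
      sum_range_id_mul_two, Nat.add_sub_cancel]
    ring
  | succ d hd ih =>
    rw [sum_range_succ, min_eq_left (hd.trans d.le_succ)]
    linarith

theorem le_expect_range_min_add_ite {D L d : ℕ} (hd : 0 < d) (hDL : D ≤ L)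
    (h : d * (D * (D + 1)) + L * (L + 1) ≤ d * (d + 1)) :
    (D : ℚ) ≤ 𝔼 i ∈ range (d + 1), ((min D i : ℕ) : ℚ) +
      𝔼 i ∈ range (d + 1), (i : ℚ) / d * (if L < i then 1 else 0) := by
  have hLd : L ≤ d := by
    have : L * (L + 1) ≤ d * (d + 1) := le_of_add_le_right h
    by_contra! hlt
    nlinarith
  have sum_min : (∑ i ∈ range (d + 1), ((min D i : ℕ) : ℚ)) * 2 + D * (D + 1) =
      2 * D * (d + 1) := mod_cast sum_range_min_mul_two_add (hDL.trans hLd)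
  have sum_tail : (∑ i ∈ range (d + 1), (i : ℚ) * (if L < i then 1 else 0)) * 2 + L * (L + 1) =
      d * (d + 1) := by
    simp only [mul_ite, mul_one, mul_zero]
    exact_mod_cast sum_range_ite_lt_mul_two_add hLd
  have hq : (d : ℚ) * (D * (D + 1)) + L * (L + 1) ≤ d * (d + 1) := mod_cast h
  have hdq : (0 : ℚ) < d := mod_cast hd
  simp only [expect_eq_sum_div_card, card_range, div_mul_eq_mul_div, ← sum_div]
  rw [div_div, ← mul_div_mul_left _ _ hdq.ne', ← add_div]
  push_cast at *
  rw [le_div_iff₀ (by positivity)]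
  nlinarith

theorem degree_ineq_max {k ℓ D d : ℕ} (hℓ : 0 < ℓ) (hkd : k ≤ d)
    (h : k * (D * (D + 1)) + ℓ * (ℓ + 1) ≤ k * (k + 1)) :
    d * (D * (D + 1)) + max ℓ D * (max ℓ D + 1) ≤ d * (d + 1) := by
  have hDk : D * (D + 1) ≤ k := by
    by_contra! hlt
    nlinarith
  obtain ⟨c, rfl⟩ := Nat.exists_eq_add_of_le hkd
  rcases le_total D ℓ with hDℓ | hℓD
  · rw [max_eq_left hDℓ]
    nlinarith
  · rw [max_eq_right hℓD]
    nlinarith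

end Arithmetic

section BackNeighbors

variable {V : Type*} {n : ℕ} {G : SimpleGraph V}

theorem coe_before_neighborFinset (G : SimpleGraph V) (π : V ≃ Fin n) (v : V)
    [Fintype (G.neighborSet v)] :
    (before π (G.neighborFinset v) v : Set V) = backNeighbors G π v := by
  ext u
  simp [mem_before, backNeighbors, G.adj_comm]

theorem min_add_ite_le_hOrd [DecidableEq V] [DecidableRel G.Adj] {D L : ℕ} (hDL : D ≤ L)
    (π : V ≃ Fin n) (v : V) [Fintype (G.neighborSet v)] :
    ((min D #(before π (G.neighborFinset v) v) : ℕ) : ℚ) +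
      (if ¬ G.IsClique (before π (G.neighborFinset v) v : Set V) ∧
        L < #(before π (G.neighborFinset v) v) then 1 else 0) ≤ hOrd G D π v := by
  rw [hOrd, ← coe_before_neighborFinset, Set.ncard_coe_finset]
  push_cast
  gcongr
  split_ifs <;> grind

theorem le_expect_hOrd [Fintype V] [DecidableEq V] [Nonempty (V ≃ Fin n)] {k ℓ D : ℕ} {v : V}
    (hineq : k * (D * (D + 1)) + ℓ * (ℓ + 1) ≤ k * (k + 1))
    (hdeg : k ≤ (G.neighborSet v).ncard) (hclique : ¬ G.IsClique (G.neighborSet v))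
    (hoverlap : MaxCliqueOverlapLT G (G.neighborSet v) ℓ) :
    (D : ℚ) ≤ 𝔼 π : V ≃ Fin n, (hOrd G D π v : ℚ) := by
  classical
  rw [← G.coe_neighborFinset] at hdeg hclique hoverlap
  rw [Set.ncard_coe_finset] at hdeg
  set N := G.neighborFinset v
  have hv : v ∉ N := G.notMem_neighborFinset_self v
  have hN : N.Nonempty := by
    by_contra! hN
    simp only [hN, coe_empty, SimpleGraph.isClique_empty, not_true] at hclique
  calc (D : ℚ)
      ≤ 𝔼 i ∈ range (#N + 1), ((min D i : ℕ) : ℚ) +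
          𝔼 i ∈ range (#N + 1), (i : ℚ) / #N * (if max ℓ D < i then 1 else 0) :=
        le_expect_range_min_add_ite hN.card_pos (le_max_right ℓ D)
          (degree_ineq_max (hoverlap.pos N.finite_toSet hclique) hdeg hineq)
    _ ≤ 𝔼 π : V ≃ Fin n, ((min D #(before π N v) : ℕ) : ℚ) + 𝔼 π : V ≃ Fin n,
          if ¬ G.IsClique (before π N v : Set V) ∧ max ℓ D < #(before π N v) then 1 else 0 := by
        rw [expect_card_before (ι := Fin n) hv fun i ↦ ((min D i : ℕ) : ℚ)]
        gcongr
        exact expect_range_le_expect_not_isClique_before hv hclique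
          (hoverlap.mono (le_max_left ℓ D))
    _ ≤ 𝔼 π : V ≃ Fin n, (hOrd G D π v : ℚ) := by
        rw [← expect_add_distrib]
        exact expect_le_expect fun π _ ↦ min_add_ite_le_hOrd (le_max_right ℓ D) π v

end BackNeighbors

theorem expected_edge_count_general {V : Type*} [Fintype V] [DecidableEq V]
    (G : SimpleGraph V) (k₀ ℓ D : ℕ)
    (hineq : 0 ≤ (k₀ : ℤ) ^ 2 + (k₀ : ℤ) * (1 - (D : ℤ) * (D + 1)) - (ℓ : ℤ) * (ℓ + 1))
    (hdeg : ∀ v : V, k₀ ≤ (G.neighborSet v).ncard)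
    (hnoclique : ∀ v : V, ¬ G.IsClique (G.neighborSet v))
    (hoverlap : ∀ v : V, MaxCliqueOverlapLT G (G.neighborSet v) ℓ) :
    ((D * Fintype.card V : ℕ) : ℚ) ≤
      (∑ π : V ≃ Fin (Fintype.card V), ∑ v : V, ((hOrd G D π v : ℕ) : ℚ))
        / (Nat.factorial (Fintype.card V) : ℚ) := by
  have hineq' : k₀ * (D * (D + 1)) + ℓ * (ℓ + 1) ≤ k₀ * (k₀ + 1) := by
    zify
    linarith
  have : Nonempty (V ≃ Fin (Fintype.card V)) := ⟨Fintype.equivFin V⟩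
  calc ((D * Fintype.card V : ℕ) : ℚ) = ∑ _v : V, (D : ℚ) := by
        rw [sum_const, card_univ, nsmul_eq_mul, Nat.cast_mul, mul_comm]
    _ ≤ ∑ v, 𝔼 π : V ≃ Fin (Fintype.card V), (hOrd G D π v : ℚ) :=
        sum_le_sum fun v _ ↦ le_expect_hOrd hineq' (hdeg v) (hnoclique v) (hoverlap v)
    _ = 𝔼 π : V ≃ Fin (Fintype.card V), ∑ v, (hOrd G D π v : ℚ) := (expect_sum_comm ..).symm
    _ = _ := by
        rw [Fintype.expect_eq_sum_div_card, Fintype.card_equiv (Fintype.equivFin V)]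

/-- Let `G` be a finite simple graph and `k₀, ℓ, D` positive integers with
`k₀² + k₀(1 − D(D+1)) − ℓ(ℓ+1) ≥ 0`. Suppose every vertex has degree at least `k₀`, no
neighborhood induces a clique, and any two distinct maximal cliques of an induced
neighborhood share at most `ℓ − 2` vertices. Then the average over all `|V|!` orderings
`π` of `V` of `∑_{v} h_π(v)` is at least `D·|V|`. -/
theorem expected_edge_count {V : Type*} [Fintype V] [DecidableEq V]
    (G : SimpleGraph V) (k₀ ℓ D : ℕ) (hk₀ : 0 < k₀) (hℓ : 0 < ℓ) (hD : 0 < D)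
    (hineq : 0 ≤ (k₀ : ℤ) ^ 2 + (k₀ : ℤ) * (1 - (D : ℤ) * (D + 1)) - (ℓ : ℤ) * (ℓ + 1))
    (hdeg : ∀ v : V, k₀ ≤ (G.neighborSet v).ncard)
    (hnoclique : ∀ v : V, ¬ G.IsClique (G.neighborSet v))
    (hmaxcliques : ∀ v : V, ∀ H₁ H₂ : Set V, H₁ ≠ H₂ →
      IsMaxCliqueIn G (G.neighborSet v) H₁ → IsMaxCliqueIn G (G.neighborSet v) H₂ →
      (H₁ ∩ H₂).ncard + 2 ≤ ℓ) :
    ((D * Fintype.card V : ℕ) : ℚ) ≤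
      (∑ π : V ≃ Fin (Fintype.card V), ∑ v : V, ((hOrd G D π v : ℕ) : ℚ))
        / (Nat.factorial (Fintype.card V) : ℚ) := by
  exact expected_edge_count_general G k₀ ℓ D hineq hdeg hnoclique
    fun v H₁ H₂ hne hH₁ hH₂ ↦ by have := hmaxcliques v H₁ H₂ hne hH₁ hH₂; lia
end

section
/- Let d be a positive integer and let a be the smallest positive integer with C(a+1, 2) ≥ d. For every n ≥ d + a + 2, the complete graph K_n contains two edge-disjoint spanning subgraphs T and G₀ such that T is a spanning tree and G₀ is d-connected. -/
/-- A simple graph `G` is `k`-connected if it has at least `k+1` vertices and removing any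
set of fewer than `k` vertices leaves a connected induced subgraph. -/
def KConnected {W : Type*} (G : SimpleGraph W) (k : ℕ) : Prop :=
  k + 1 ≤ Nat.card W ∧
    ∀ S : Set W, S.Finite → S.ncard < k → (G.induce (Sᶜ : Set W)).Connected

/-!
If the complement of a graph `F` is disconnected, then every vertex on one side is joined in `F` to
every vertex on the other. When `F` is a forest it contains no 4-cycle, so one of the sides is a
single vertex, which is then universal in `F`. Hence a forest on more than `Δ + 1` vertices, where
`Δ` bounds its degrees, has connected complement. Induced subgraphs of forests are forests, so the
complement of a forest on more than `Δ + d` vertices is `d`-connected. A Hamiltonian path has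
`Δ ≤ 2`, and `n ≥ d + a + 2 ≥ d + 3`.
-/

theorem induce_compl_eq_compl_induce {V : Type*} (G : SimpleGraph V) (s : Set V) :
    Gᶜ.induce s = (G.induce s)ᶜ := by
  ext x y
  simp [SimpleGraph.compl_adj, Subtype.ext_iff]

section Forest

variable {V : Type*} {F : SimpleGraph V}

theorem commonNeighbors_subsingleton_of_isAcyclic (hF : F.IsAcyclic) {u w : V} (huw : u ≠ w) :
    (F.commonNeighbors u w).Subsingleton := by
  have isPath_two {x : V} (hux : F.Adj u x) (hxw : F.Adj x w) :
      (SimpleGraph.Walk.cons hux hxw.toWalk).IsPath := by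
    simp [SimpleGraph.Walk.cons_isPath_iff, hxw.ne, hux.ne, huw]
  rintro x ⟨hux, hwx⟩ y ⟨huy, hwy⟩
  have same_path := (hF.subsingleton_path u w).elim
    ⟨_, isPath_two hux hwx.symm⟩ ⟨_, isPath_two huy hwy.symm⟩
  exact congrArg (fun p : F.Path u w ↦ p.1.snd) same_path

theorem preconnected_compl_of_isAcyclic_of_not_isUniversal (hF : F.IsAcyclic)
    (huniv : ∀ v, ¬ F.IsUniversal v) : Fᶜ.Preconnected := by
  have adj_of_not_reachable {x y : V} (hxy : ¬ Fᶜ.Reachable x y) : F.Adj x y := by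
    simpa only [compl_compl] using (Fᶜ.reachable_or_compl_adj x y).resolve_left hxy
  have exists_compl_adj (x : V) : ∃ y, Fᶜ.Adj x y := by
    simpa [SimpleGraph.IsUniversal, SimpleGraph.compl_adj] using huniv x
  by_contra! hdisc
  simp only [SimpleGraph.Preconnected, not_forall] at hdisc
  obtain ⟨u, v, huv⟩ := hdisc
  obtain ⟨u', huu'⟩ := exists_compl_adj u
  obtain ⟨v', hvv'⟩ := exists_compl_adj v
  have huv' : ¬ Fᶜ.Reachable u v' := fun h ↦ huv (h.trans hvv'.reachable.symm)
  have hu'v : ¬ Fᶜ.Reachable u' v := fun h ↦ huv (huu'.reachable.trans h)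
  have hu'v' : ¬ Fᶜ.Reachable u' v' := fun h ↦ huv' (huu'.reachable.trans h)
  exact hvv'.ne (commonNeighbors_subsingleton_of_isAcyclic hF huu'.ne
    ⟨adj_of_not_reachable huv, adj_of_not_reachable hu'v⟩
    ⟨adj_of_not_reachable huv', adj_of_not_reachable hu'v'⟩)

variable [Fintype V] [DecidableRel F.Adj]

theorem connected_compl_of_isAcyclic_of_maxDegree_lt (hF : F.IsAcyclic)
    (hdeg : F.maxDegree + 1 < Fintype.card V) : Fᶜ.Connected := by
  classical
  have : Nonempty V := Fintype.card_pos_iff.mp (by omega)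
  refine ⟨preconnected_compl_of_isAcyclic_of_not_isUniversal hF fun v ↦ ?_⟩
  rw [← SimpleGraph.degree_lt_card_sub_one]
  have := F.degree_le_maxDegree v
  omega

theorem kConnected_compl_of_isAcyclic_of_maxDegree_lt (hF : F.IsAcyclic) {k : ℕ}
    (hdeg : F.maxDegree + k < Fintype.card V) : KConnected Fᶜ k := by
  classical
  refine ⟨by rw [Nat.card_eq_fintype_card]; omega, fun S _ hS ↦ ?_⟩
  have maxDegree_induce_le : (F.induce Sᶜ).maxDegree ≤ F.maxDegree :=
    (SimpleGraph.Embedding.induce Sᶜ).toCopy.maxDegree_mono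
  have card_add_card_compl : S.ncard + Fintype.card ↥Sᶜ = Fintype.card V := by
    simpa only [Set.ncard_eq_toFinset_card', Set.toFinset_card, Nat.card_eq_fintype_card]
      using S.ncard_add_ncard_compl
  rw [induce_compl_eq_compl_induce]
  exact connected_compl_of_isAcyclic_of_maxDegree_lt (hF.induce Sᶜ) (by omega)

end Forest

theorem exists_isTree_le_kConnected_compl {V : Type*} [Fintype V] {G : SimpleGraph V}
    [DecidableRel G.Adj] (hG : G.Connected) {k : ℕ} (hdeg : G.maxDegree + k < Fintype.card V) :
    ∃ T ≤ G, T.IsTree ∧ KConnected Tᶜ k := by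
  classical
  obtain ⟨T, hTG, hT⟩ := hG.exists_isTree_le
  have maxDegree_le : T.maxDegree ≤ G.maxDegree := SimpleGraph.maxDegree_mono hTG
  exact ⟨T, hTG, hT, kConnected_compl_of_isAcyclic_of_maxDegree_lt hT.isAcyclic (by omega)⟩

theorem maxDegree_pathGraph_le_two (n : ℕ) [DecidableRel (SimpleGraph.pathGraph n).Adj] :
    (SimpleGraph.pathGraph n).maxDegree ≤ 2 := by
  refine (SimpleGraph.maxDegree_mono SimpleGraph.pathGraph_le_cycleGraph).trans ?_
  refine SimpleGraph.maxDegree_le_of_forall_degree_le _ _ fun v ↦ ?_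
  match n with
  | 1 => simp
  | _ + 2 => exact SimpleGraph.cycleGraph_degree_two_le.trans_le Finset.card_le_two

theorem complete_graph_tree_and_rigid_general (d n : ℕ) (hn : d + 3 ≤ n) :
    ∃ T G₀ : SimpleGraph (Fin n),
      T ≤ (⊤ : SimpleGraph (Fin n)) ∧ G₀ ≤ (⊤ : SimpleGraph (Fin n)) ∧
      T.IsTree ∧ Disjoint T.edgeSet G₀.edgeSet ∧ KConnected G₀ d := by
  classical
  have : NeZero n := ⟨by omega⟩
  have path_connected : (SimpleGraph.pathGraph n).Connected :=
    ⟨SimpleGraph.pathGraph_preconnected n⟩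
  have path_degree := maxDegree_pathGraph_le_two n
  obtain ⟨T, -, hT, hTc⟩ := exists_isTree_le_kConnected_compl path_connected (k := d)
    (by rw [Fintype.card_fin]; omega)
  exact ⟨T, Tᶜ, le_top, le_top, hT, SimpleGraph.disjoint_edgeSet.mpr disjoint_compl_right, hTc⟩

/-- Let `d` be a positive integer and `a` the smallest positive integer with
`C(a+1,2) ≥ d`. For every `n ≥ d + a + 2`, the complete graph `K_n` contains two
edge-disjoint spanning subgraphs `T` and `G₀` such that `T` is a spanning tree and
`G₀` is `d`-connected. -/
theorem complete_graph_tree_and_rigid (d a n : ℕ) (hd : 0 < d) (ha : 0 < a)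
    (had : d ≤ (a + 1).choose 2)
    (hamin : ∀ b : ℕ, 0 < b → d ≤ (b + 1).choose 2 → a ≤ b)
    (hn : d + a + 2 ≤ n) :
    ∃ T G₀ : SimpleGraph (Fin n),
      T ≤ (⊤ : SimpleGraph (Fin n)) ∧ G₀ ≤ (⊤ : SimpleGraph (Fin n)) ∧
      T.IsTree ∧ Disjoint T.edgeSet G₀.edgeSet ∧ KConnected G₀ d :=
  complete_graph_tree_and_rigid_general d n (by omega)
end

section
/- Let d be a positive integer and let a be the smallest positive integer with C(a+1, 2) ≥ d. Let V₁ and V₂ be finite sets with |V₁ ∩ V₂| ≥ d + a + 2, and let G be the simple graph on vertex set V₁ ∪ V₂ whose edges are exactly the pairs of distinct vertices that both lie in V₁ or both lie in V₂ (the union of the complete graphs on V₁ and on V₂). Then G contains two edge-disjoint spanning subgraphs T and G₀ such that T is a spanning tree of G and G₀ is d-connected. -/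
/-!
Only the vertices of `V₁ ∩ V₂` matter: they are universal in `G`, and `d + 3` universal vertices
suffice. Take a spanning tree `T` in which every vertex has at most two universal neighbours, namely
a Hamiltonian path of the universal vertices with all other vertices hung from one of its ends.
Delete fewer than `d` vertices from `G \ T`; at least four universal vertices survive. On these,
`G \ T` is the complement of a forest without a universal vertex, and such a complement is
connected, because two of its components would produce a 4-cycle in the forest. Every other
surviving vertex has a neighbour among the surviving universal vertices.
-/

section

open SimpleGraph

variable {V : Type*} {F G : SimpleGraph V}

theorem subsingleton_commonNeighbors_of_isAcyclic (hF : F.IsAcyclic) {u v : V} (huv : u ≠ v) :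
    (F.commonNeighbors u v).Subsingleton := by
  intro x hx y hy
  have exists_path_through {z : V} (hz : z ∈ F.commonNeighbors u v) :
      ∃ p : F.Path u v, p.1.snd = z := by
    obtain ⟨huz, hvz⟩ := F.mem_commonNeighbors.1 hz
    exact ⟨⟨.cons huz (.cons hvz.symm .nil), by simp [huv, huz.ne, hvz.ne']⟩, by simp⟩
  obtain ⟨p, rfl⟩ := exists_path_through hx
  obtain ⟨q, rfl⟩ := exists_path_through hy
  rw [(hF.subsingleton_path u v).elim p q]

theorem connected_compl_of_isAcyclic [Nonempty V] (hF : F.IsAcyclic)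
    (hF_univ : ∀ v, ¬F.IsUniversal v) : Fᶜ.Connected := by
  refine ⟨fun u v ↦ by_contra fun huv ↦ ?_⟩
  have adj_of_not_reachable {x y : V} (h : ¬Fᶜ.Reachable x y) : F.Adj x y := by
    simpa using (Fᶜ.reachable_or_compl_adj x y).resolve_left h
  have exists_compl_adj (x : V) : ∃ y, Fᶜ.Adj x y := by
    simpa [IsUniversal] using hF_univ x
  obtain ⟨u', huu'⟩ := exists_compl_adj u
  obtain ⟨v', hvv'⟩ := exists_compl_adj v
  have huv' : ¬Fᶜ.Reachable u v' := fun h ↦ huv (h.trans hvv'.symm.reachable)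
  have hu'v : ¬Fᶜ.Reachable u' v := fun h ↦ huv (huu'.reachable.trans h)
  have hu'v' : ¬Fᶜ.Reachable u' v' := fun h ↦ huv' (huu'.reachable.trans h)
  exact hvv'.ne <| subsingleton_commonNeighbors_of_isAcyclic hF huu'.ne
    ⟨adj_of_not_reachable huv, adj_of_not_reachable hu'v⟩
    ⟨adj_of_not_reachable huv', adj_of_not_reachable hu'v'⟩

theorem not_isUniversal_induce {s : Set V} (v : s)
    (hv : (s ∩ F.neighborSet v).ncard + 1 < s.ncard) : ¬(F.induce s).IsUniversal v := by
  intro h_univ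
  have hs : s.Finite := Set.finite_of_ncard_pos (by lia)
  have s_subset : s ⊆ insert (v : V) (s ∩ F.neighborSet v) := fun w hw ↦
    or_iff_not_imp_left.2 fun hwv ↦
      ⟨hw, h_univ (w := ⟨w, hw⟩) fun h ↦ hwv (congrArg Subtype.val h).symm⟩
  have := Set.ncard_le_ncard s_subset ((hs.inter_of_left _).insert _)
  have := Set.ncard_insert_le (v : V) (s ∩ F.neighborSet v)
  lia

theorem induce_sdiff_eq_compl_of_isClique {s : Set V} (hs : G.IsClique s) :
    (G \ F).induce s = (F.induce s)ᶜ := by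
  ext u v
  have hG : G.Adj u v ↔ u ≠ v := by
    simpa using congrArg (fun H : SimpleGraph s ↦ H.Adj u v) (induce_eq_top.2 hs)
  simp [hG]

theorem connected_induce_sdiff_of_isClique {s : Set V} (hs : G.IsClique s) (hs_ne : s.Nonempty)
    (hF : F.IsAcyclic) (hF_nbr : ∀ v ∈ s, (s ∩ F.neighborSet v).ncard + 1 < s.ncard) :
    ((G \ F).induce s).Connected := by
  have := hs_ne.to_subtype
  rw [induce_sdiff_eq_compl_of_isClique hs]
  exact connected_compl_of_isAcyclic (hF.induce s) fun v ↦ not_isUniversal_induce v (hF_nbr v v.2)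

theorem connected_induce_of_subset {s t : Set V} (hst : s ⊆ t) (hs : (G.induce s).Connected)
    (h_adj : ∀ v ∈ t \ s, ∃ w ∈ s, G.Adj v w) : (G.induce t).Connected := by
  obtain ⟨⟨u, hu⟩⟩ := hs.nonempty
  have reachable_of_mem {w : V} (hw : w ∈ s) :
      (G.induce t).Reachable ⟨u, hst hu⟩ ⟨w, hst hw⟩ :=
    (hs ⟨u, hu⟩ ⟨w, hw⟩).map (G.induceHomOfLE hst).toHom
  refine connected_iff_exists_forall_reachable _ |>.2 ⟨⟨u, hst hu⟩, fun ⟨v, hv⟩ ↦ ?_⟩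
  by_cases hvs : v ∈ s
  · exact reachable_of_mem hvs
  · obtain ⟨w, hw, hvw⟩ := h_adj v ⟨hv, hvs⟩
    have hwv : (G.induce t).Adj ⟨w, hst hw⟩ ⟨v, hv⟩ := hvw.symm
    exact (reachable_of_mem hw).trans hwv.reachable

theorem kConnected_sdiff_of_isAcyclic [Finite V] {d k : ℕ} (hF : F.IsAcyclic)
    (hF_nbr : ∀ v, (G.universalVerts ∩ F.neighborSet v).ncard ≤ k)
    (hG : d + k + 1 ≤ G.universalVerts.ncard) : KConnected (G \ F) d := by
  refine ⟨by have := Set.ncard_le_card G.universalVerts; lia, fun S hS hSd ↦ ?_⟩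
  set D := G.universalVerts \ S
  have hD_card : k + 2 ≤ D.ncard := by
    have := Set.le_ncard_sdiff S G.universalVerts hS
    lia
  have hD_nbr (v : V) : (D ∩ F.neighborSet v).ncard ≤ k :=
    (Set.ncard_le_ncard (Set.inter_subset_inter_left _ Set.sdiff_subset)).trans (hF_nbr v)
  refine connected_induce_of_subset (s := D) (fun v hv ↦ hv.2) ?_ ?_
  · refine connected_induce_sdiff_of_isClique (G.isClique_universalVerts.subset Set.sdiff_subset)
      (Set.nonempty_of_ncard_ne_zero (by lia)) hF fun v _ ↦ ?_
    have := hD_nbr v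
    lia
  · rintro v ⟨-, hvD⟩
    obtain ⟨w, hwD, hw⟩ := Set.exists_mem_notMem_of_ncard_lt_ncard
      (show (D ∩ F.neighborSet v).ncard < D.ncard from (hD_nbr v).trans_lt (by lia))
    have hwv : G.Adj w v := hwD.1 (ne_of_mem_of_not_mem hwD hvD)
    exact ⟨w, hwD, hwv.symm, fun hvw ↦ hw ⟨hwD, hvw⟩⟩

/-- The graph joining two vertices of consecutive depths whenever the shallower one lies in `C`.
It encodes a rooted tree by the depths of its vertices: if `depth` is injective on `C`, then every
vertex has at most one parent, and the vertices in `C` of consecutive depths form paths. -/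
def depthGraph (C : Set V) (depth : V → ℕ) : SimpleGraph V :=
  fromRel fun parent child ↦ parent ∈ C ∧ depth child = depth parent + 1

section depthGraph

variable {C : Set V} {depth : V → ℕ}

theorem depthGraph_adj {u v : V} : (depthGraph C depth).Adj u v ↔
    (u ∈ C ∧ depth v = depth u + 1) ∨ (v ∈ C ∧ depth u = depth v + 1) := by
  rw [depthGraph, fromRel_adj, and_iff_right_of_imp]
  rintro h rfl
  lia

theorem depthGraph_le (hC : C ⊆ G.universalVerts) : depthGraph C depth ≤ G := by
  intro u v huv
  rcases depthGraph_adj.1 huv with ⟨hu, -⟩ | ⟨hv, -⟩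
  · exact hC hu huv.ne
  · exact (hC hv huv.ne').symm

theorem depthGraph_connected (h_root : ∃! r, depth r = 0)
    (h_parent : ∀ v k, depth v = k + 1 → ∃ u ∈ C, depth u = k) :
    (depthGraph C depth).Connected := by
  obtain ⟨r, -, hr_unique⟩ := h_root
  have reachable_root (k : ℕ) : ∀ v, depth v = k → (depthGraph C depth).Reachable r v := by
    induction k with
    | zero => exact fun v hv ↦ hr_unique v hv ▸ .rfl
    | succ k ih =>
      intro v hv
      obtain ⟨u, huC, hu⟩ := h_parent v k hv
      exact (ih u hu).trans (depthGraph_adj.2 (.inl ⟨huC, by lia⟩)).reachable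
  exact connected_iff_exists_forall_reachable _ |>.2 ⟨r, fun v ↦ reachable_root _ v rfl⟩

theorem ncard_inter_neighborSet_depthGraph_le_two (hC : C.InjOn depth) (v : V) :
    (C ∩ (depthGraph C depth).neighborSet v).ncard ≤ 2 := by
  have depth_mem : depth '' (C ∩ (depthGraph C depth).neighborSet v) ⊆
      {depth v - 1, depth v + 1} := by
    rintro _ ⟨w, ⟨-, hvw⟩, rfl⟩
    rcases depthGraph_adj.1 hvw with ⟨-, h⟩ | ⟨-, h⟩ <;> simp [h]
  calc (C ∩ (depthGraph C depth).neighborSet v).ncard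
      = (depth '' (C ∩ (depthGraph C depth).neighborSet v)).ncard :=
        (hC.mono Set.inter_subset_left).ncard_image.symm
    _ ≤ ({depth v - 1, depth v + 1} : Set ℕ).ncard := Set.ncard_le_ncard depth_mem
    _ = 2 := Set.ncard_pair (by lia)

end depthGraph

theorem exists_depth_injOn {C : Set V} (hC : C.Finite) (hC_ne : C.Nonempty) :
    ∃ depth : V → ℕ, C.InjOn depth ∧ (∃! r, depth r = 0) ∧
      ∀ v k, depth v = k + 1 → ∃ u ∈ C, depth u = k := by
  classical
  have hC_pos : 0 < C.ncard := (Set.ncard_pos hC).2 hC_ne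
  obtain ⟨index, h_index⟩ := hC.exists_bijOn_of_encard_eq (t := Set.Iio C.ncard)
    (by simp [Set.encard_eq_coe_toFinset_card, hC.cast_ncard_eq])
  let depth : V → ℕ := C.piecewise index fun _ ↦ 1
  have depth_bijOn : Set.BijOn depth C (Set.Iio C.ncard) :=
    h_index.congr (Set.piecewise_eqOn C index _).symm
  have depth_of_notMem {v : V} (hv : v ∉ C) : depth v = 1 := Set.piecewise_eq_of_notMem _ _ _ hv
  obtain ⟨r, hrC, hr⟩ := depth_bijOn.surjOn hC_pos
  refine ⟨depth, depth_bijOn.injOn, ⟨r, hr, fun v hv ↦ ?_⟩, fun v k hv ↦ ?_⟩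
  · have hvC : v ∈ C := by_contra fun h ↦ by simp [depth_of_notMem h] at hv
    exact depth_bijOn.injOn hvC hrC (hv.trans hr.symm)
  · by_cases hvC : v ∈ C
    · have hv_lt : depth v < C.ncard := depth_bijOn.mapsTo hvC
      exact depth_bijOn.surjOn (show k < C.ncard by lia)
    · have hk : k = 0 := by simpa [depth_of_notMem hvC] using hv.symm
      exact ⟨r, hrC, hr.trans hk.symm⟩

theorem exists_isTree_le_ncard_universalVerts_inter_le_two (hG : G.universalVerts.Finite)
    (hG_ne : G.universalVerts.Nonempty) :
    ∃ T ≤ G, T.IsTree ∧ ∀ v, (G.universalVerts ∩ T.neighborSet v).ncard ≤ 2 := by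
  obtain ⟨depth, h_inj, h_root, h_parent⟩ := exists_depth_injOn hG hG_ne
  obtain ⟨T, hT_le, hT⟩ := (depthGraph_connected h_root h_parent).exists_isTree_le
  refine ⟨T, hT_le.trans (depthGraph_le subset_rfl), hT, fun v ↦ ?_⟩
  refine (Set.ncard_le_ncard ?_ (hG.inter_of_left _)).trans
    (ncard_inter_neighborSet_depthGraph_le_two h_inj v)
  exact Set.inter_subset_inter_right _ fun w hvw ↦ hT_le hvw

theorem inter_subset_universalVerts {s t : Set V} (hst : s ∪ t = Set.univ) (hs : G.IsClique s)
    (ht : G.IsClique t) : s ∩ t ⊆ G.universalVerts := by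
  rintro u ⟨hus, hut⟩ v huv
  rcases hst.symm.subset (Set.mem_univ v) with hvs | hvt
  · exact hs hus hvs huv
  · exact ht hut hvt huv

theorem union_of_cliques_tree_and_rigid_general [Finite V] {d : ℕ}
    (hG : d + 3 ≤ G.universalVerts.ncard) :
    ∃ T G₀ : SimpleGraph V, T ≤ G ∧ G₀ ≤ G ∧
      T.IsTree ∧ Disjoint T.edgeSet G₀.edgeSet ∧ KConnected G₀ d := by
  obtain ⟨T, hT_le, hT, hT_nbr⟩ := exists_isTree_le_ncard_universalVerts_inter_le_two
    G.universalVerts.toFinite (Set.nonempty_of_ncard_ne_zero (by lia))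
  exact ⟨T, G \ T, hT_le, sdiff_le, hT, disjoint_edgeSet.2 disjoint_sdiff_self_right,
    kConnected_sdiff_of_isAcyclic hT.isAcyclic hT_nbr hG⟩

end

/-- Let `d` be a positive integer and `a` the smallest positive integer with
`C(a+1,2) ≥ d`. If `V₁` and `V₂` cover the (finite) vertex set, `|V₁ ∩ V₂| ≥ d + a + 2`,
and `G` is the union of the complete graphs on `V₁` and on `V₂`, then `G` contains two
edge-disjoint spanning subgraphs `T` and `G₀` such that `T` is a spanning tree of `G` and
`G₀` is `d`-connected. -/
theorem union_of_cliques_tree_and_rigid {V : Type*} [Fintype V] (d a : ℕ)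
    (hd : 0 < d) (ha : 0 < a) (had : d ≤ (a + 1).choose 2)
    (hamin : ∀ b : ℕ, 0 < b → d ≤ (b + 1).choose 2 → a ≤ b)
    (V₁ V₂ : Set V) (hcover : V₁ ∪ V₂ = Set.univ)
    (hint : d + a + 2 ≤ (V₁ ∩ V₂).ncard)
    (G : SimpleGraph V)
    (hG : ∀ u v : V, G.Adj u v ↔
      u ≠ v ∧ ((u ∈ V₁ ∧ v ∈ V₁) ∨ (u ∈ V₂ ∧ v ∈ V₂))) :
    ∃ T G₀ : SimpleGraph V, T ≤ G ∧ G₀ ≤ G ∧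
      T.IsTree ∧ Disjoint T.edgeSet G₀.edgeSet ∧ KConnected G₀ d := by
  have h_univ : V₁ ∩ V₂ ⊆ G.universalVerts := inter_subset_universalVerts hcover
    (fun u hu v hv huv ↦ (hG u v).2 ⟨huv, .inl ⟨hu, hv⟩⟩)
    (fun u hu v hv huv ↦ (hG u v).2 ⟨huv, .inr ⟨hu, hv⟩⟩)
  have h_card := Set.ncard_le_ncard h_univ
  exact union_of_cliques_tree_and_rigid_general (by lia)
end

section
/- Let c be a positive integer and let G be a c-connected finite simple graph with at least c + 2 vertices. If v is a vertex of G whose neighborhood N_G(v) induces a clique in G, then the graph G − v obtained by deleting v is c-connected. -/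
section Connectivity

variable {V W : Type*} {G : SimpleGraph V} {H : SimpleGraph W}

theorem reachable_map_of_forall_adj_reachable {f : V → W}
    (hf : ∀ ⦃x y⦄, G.Adj x y → H.Reachable (f x) (f y)) {x y : V} (hxy : G.Reachable x y) :
    H.Reachable (f x) (f y) := by
  obtain ⟨p⟩ := hxy
  induction p with
  | nil => rfl
  | cons hadj _ ih => exact (hf hadj).trans ih

theorem preconnected_of_surjective_of_forall_adj_reachable {f : V → W}
    (hG : G.Preconnected) (hsurj : f.Surjective)
    (hf : ∀ ⦃x y⦄, G.Adj x y → H.Reachable (f x) (f y)) : H.Preconnected :=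
  hsurj.forall₂.2 fun x y ↦ reachable_map_of_forall_adj_reachable hf (hG x y)

theorem preconnected_induce_compl_singleton_of_isClique_neighborSet {v : V}
    (hG : G.Preconnected) (hclique : G.IsClique (G.neighborSet v)) :
    (G.induce {v}ᶜ).Preconnected := by
  classical
  cases subsingleton_or_nontrivial V with
  | inl _ => exact .of_subsingleton
  | inr _ =>
    obtain ⟨u, hvu⟩ : ∃ u, G.Adj v u := hG.exists_adj_of_nontrivial v
    -- Folding `v` onto its neighbor `u` either preserves or collapses each edge, because every
    -- other neighbor of `v` is adjacent to `u`.
    let fold (x : V) : ({v}ᶜ : Set V) := if hx : x = v then ⟨u, hvu.ne'⟩ else ⟨x, hx⟩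
    have fold_self : fold v = ⟨u, hvu.ne'⟩ := dif_pos rfl
    have fold_of_ne {x : V} (hx : x ≠ v) : fold x = ⟨x, hx⟩ := dif_neg hx
    have reachable_fold_self {y : V} (hvy : G.Adj v y) :
        (G.induce {v}ᶜ).Reachable (fold v) (fold y) := by
      rw [fold_self, fold_of_ne hvy.ne']
      by_cases huy : u = y
      · subst huy
        rfl
      · exact SimpleGraph.Adj.reachable (hclique hvu hvy huy)
    refine preconnected_of_surjective_of_forall_adj_reachable hG
      (fun x ↦ ⟨x, fold_of_ne x.2⟩) fun x y hxy ↦ ?_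
    by_cases hx : x = v
    · subst hx
      exact reachable_fold_self hxy
    by_cases hy : y = v
    · subst hy
      exact (reachable_fold_self hxy.symm).symm
    rw [fold_of_ne hx, fold_of_ne hy]
    exact SimpleGraph.Adj.reachable hxy

/-- An induced subgraph of an induced subgraph of `G`, identified with the subgraph of `G` induced
on the same vertices. It lets iterated vertex deletions be compared as sets of vertices of `G`. -/
noncomputable def induceInduceIso (G : SimpleGraph V) (s : Set V) (t : Set s) :
    (G.induce s).induce t ≃g G.induce (Subtype.val '' t) where
  toEquiv := Equiv.Set.image Subtype.val t Subtype.val_injective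
  map_rel_iff' := Iff.rfl

theorem preconnected_induce_sdiff_singleton_of_isClique {s : Set V} {v : V}
    (hs : (G.induce s).Preconnected) (hclique : G.IsClique (G.neighborSet v ∩ s)) :
    (G.induce (s \ {v})).Preconnected := by
  by_cases hv : v ∈ s
  swap
  · rwa [Set.sdiff_singleton_eq_self hv]
  have hclique_induce : (G.induce s).IsClique ((G.induce s).neighborSet ⟨v, hv⟩) :=
    fun x hx y hy hxy ↦ hclique ⟨hx, x.2⟩ ⟨hy, y.2⟩ (Subtype.val_injective.ne hxy)
  have himage : Subtype.val '' ({⟨v, hv⟩}ᶜ : Set s) = s \ {v} := by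
    rw [Set.image_compl_eq_range_sdiff_image Subtype.val_injective, Subtype.range_coe,
      Set.image_singleton]
  rw [← himage, ← (induceInduceIso G s _).preconnected_iff]
  exact preconnected_induce_compl_singleton_of_isClique_neighborSet hs hclique_induce

theorem preconnected_induce_compl_singleton_induce_compl_of_isClique
    {v : V} {S : Set ({v}ᶜ : Set V)}
    (hS : (G.induce (Subtype.val '' S)ᶜ).Preconnected)
    (hclique : G.IsClique (G.neighborSet v \ Subtype.val '' S)) :
    ((G.induce {v}ᶜ).induce Sᶜ).Preconnected := by
  have himage : Subtype.val '' Sᶜ = (Subtype.val '' S)ᶜ \ {v} := by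
    rw [Set.image_compl_eq_range_sdiff_image Subtype.val_injective, Subtype.range_coe,
      Set.sdiff_eq, Set.sdiff_eq, Set.inter_comm]
  rw [(induceInduceIso G _ _).preconnected_iff, himage]
  exact preconnected_induce_sdiff_singleton_of_isClique hS hclique

end Connectivity

/-- Let `G` be a `c`-connected finite simple graph with at least `c + 2` vertices. If the
neighborhood of a vertex `v` induces a clique in `G`, then the graph `G − v` obtained by
deleting `v` is `c`-connected. -/
theorem delete_simplicial_vertex {V : Type*} [Fintype V] (c : ℕ) (hc : 0 < c)
    (G : SimpleGraph V) (hG : KConnected G c)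
    (hcard : c + 2 ≤ Fintype.card V)
    (v : V) (hclique : G.IsClique (G.neighborSet v)) :
    KConnected (G.induce ({v}ᶜ : Set V)) c := by
  have hcard_compl : c + 1 ≤ Nat.card ({v}ᶜ : Set V) := by
    rw [Nat.card_coe_set_eq, Set.ncard_compl, Set.ncard_singleton, Nat.card_eq_fintype_card]
    omega
  refine ⟨hcard_compl, fun S hSfin hS ↦ ?_⟩
  have hS_image : (Subtype.val '' S).ncard < c := by
    rwa [Set.ncard_image_of_injective S Subtype.val_injective]
  have hS_compl : Sᶜ.Nonempty := by
    rw [Set.nonempty_compl]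
    rintro rfl
    rw [Set.ncard_univ] at hS
    omega
  have : Nonempty (Sᶜ : Set ({v}ᶜ : Set V)) := hS_compl.to_subtype
  have hG_sub := (hG.2 _ (hSfin.image _) hS_image).preconnected
  exact ⟨preconnected_induce_compl_singleton_induce_compl_of_isClique hG_sub
    (hclique.subset Set.sdiff_subset)⟩
end
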